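/- arXiv:math/0609013 — 2 statements merged into one kernel-verified Lean document; each statement's English description precedes it below -/
import Mathlib

section
/- Let m>0, let k denote the continuous extension to the closed upper half-plane of the branch of √(z²−m²) with Im k(z)>0 for Im z>0, and let ζ∈C_c^∞(ℝ). Then for every fixed x∈ℝ and every ε≥0, the function t ↦ (1/2π)∫_ℝ e^{ik(ω+iε)|x|} ζ(ω) e^{−iωt} dω belongs to L¹(ℝ;ℂ) (as a function of t∈ℝ). -/
open MeasureTheory Filter
open scoped ENNReal Topology

noncomputable section

open scoped Classical in
/-- The continuous extension to the closed upper half-plane of the branch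
`k(z) = √(z²−m²)` with `Im k(z) > 0` for `Im z > 0`: in the open upper half-plane
`k(z) = i(m²−z²)^{1/2}` (principal power), and on the real axis
`k(ω) = √(ω²−m²)` for `ω ≥ m`, `k(ω) = −√(ω²−m²)` for `ω ≤ −m`,
and `k(ω) = i√(m²−ω²)` for `|ω| ≤ m`. -/
def kCl (m : ℝ) (w : ℂ) : ℂ :=
  if 0 < w.im then Complex.I * (((m:ℂ)^2 - w^2) ^ ((1:ℂ)/2))
  else if m ≤ w.re then ((Real.sqrt (w.re^2 - m^2) : ℝ) : ℂ)
  else if w.re ≤ -m then -((Real.sqrt (w.re^2 - m^2) : ℝ) : ℂ)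
  else Complex.I * ((Real.sqrt (m^2 - w.re^2) : ℝ) : ℂ)

theorem norm_exp_neg_I_mul (s t : ℝ) :
    ‖Complex.exp (-Complex.I * (s : ℂ) * (t : ℂ))‖ = 1 := by
  rw [Complex.norm_exp]
  simp

open Set in
theorem oscillatory_integral_bound {c A B : ℝ} (hc : 0 < c) {g h : ℝ → ℂ}
    (hg : ∀ s ∈ Ioc 0 c, HasDerivAt g (h s) s) (hh : ContinuousOn h (Ioc 0 c))
    (hA : ∀ s ∈ Ioc 0 c, ‖g s‖ ≤ A * s ^ (-1 / 2 : ℝ))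
    (hB : ∀ s ∈ Ioc 0 c, ‖h s‖ ≤ B * s ^ (-3 / 2 : ℝ)) :
    IntervalIntegrable g volume 0 c ∧ ∀ t : ℝ, t ≠ 0 →
      ‖∫ s in (0 : ℝ)..c, g s * Complex.exp (-Complex.I * (s : ℂ) * (t : ℂ))‖
        ≤ (4 * A + 2 * B) * |t| ^ (-1 / 2 : ℝ) := by
  have hA0 : 0 ≤ A := by
    have := (norm_nonneg _).trans (hA c ⟨hc, le_rfl⟩)
    exact nonneg_of_mul_nonneg_left this (by positivity)
  have hB0 : 0 ≤ B := by
    have := (norm_nonneg _).trans (hB c ⟨hc, le_rfl⟩)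
    exact nonneg_of_mul_nonneg_left this (by positivity)
  have hgc : ContinuousOn g (Ioc 0 c) := fun s hs => (hg s hs).continuousAt.continuousWithinAt
  have hdom : ∀ a b : ℝ, IntervalIntegrable (fun s : ℝ => A * s ^ (-1 / 2 : ℝ)) volume a b :=
    fun a b => (intervalIntegral.intervalIntegrable_rpow' (by norm_num)).const_mul A
  have hgi : IntervalIntegrable g volume 0 c := by
    refine (hdom 0 c).mono_fun' ?_ ?_
    · rw [uIoc_of_le hc.le]
      exact hgc.aestronglyMeasurable measurableSet_Ioc
    · rw [uIoc_of_le hc.le]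
      exact (ae_restrict_iff' measurableSet_Ioc).2 (Eventually.of_forall hA)
  refine ⟨hgi, fun t ht => ?_⟩
  have hecont : Continuous fun s : ℝ => Complex.exp (-Complex.I * (s : ℂ) * (t : ℂ)) := by
    fun_prop
  have hei : IntervalIntegrable (fun s : ℝ => g s * Complex.exp (-Complex.I * (s : ℂ) * (t : ℂ)))
      volume 0 c := hgi.mul_continuousOn hecont.continuousOn
  have hτ : 0 < |t| := abs_pos.2 ht
  have near : ∀ d, 0 ≤ d → d ≤ c →
      ‖∫ s in (0 : ℝ)..d, g s * Complex.exp (-Complex.I * (s : ℂ) * (t : ℂ))‖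
        ≤ 2 * A * d ^ (1 / 2 : ℝ) := by
    intro d hd hdc
    calc _ ≤ ∫ s in (0 : ℝ)..d, A * s ^ (-1 / 2 : ℝ) := by
          refine intervalIntegral.norm_integral_le_of_norm_le hd
            (Eventually.of_forall fun s hs => ?_) (hdom 0 d)
          rw [norm_mul, norm_exp_neg_I_mul, mul_one]
          exact hA s ⟨hs.1, hs.2.trans hdc⟩
      _ = 2 * A * d ^ (1 / 2 : ℝ) := by
          rw [intervalIntegral.integral_const_mul, integral_rpow (Or.inl (by norm_num))]
          norm_num
          ring
  have hhalf : (|t|⁻¹) ^ (1 / 2 : ℝ) = |t| ^ (-1 / 2 : ℝ) := by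
    rw [Real.inv_rpow hτ.le, ← Real.rpow_neg hτ.le]
    norm_num
  rcases le_total c |t|⁻¹ with hct | hct
  · calc _ ≤ 2 * A * c ^ (1 / 2 : ℝ) := near c hc.le le_rfl
      _ ≤ 2 * A * |t| ^ (-1 / 2 : ℝ) := by
        rw [← hhalf]
        gcongr
      _ ≤ _ := by
        gcongr
        linarith
  · set d := |t|⁻¹ with hd
    have hd0 : 0 < d := inv_pos.2 hτ
    have hsub : Icc d c ⊆ Ioc 0 c := fun s hs => ⟨hd0.trans_le hs.1, hs.2⟩
    have hdc_int : IntervalIntegrable h volume d c := by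
      refine ContinuousOn.intervalIntegrable ?_
      rw [uIcc_of_le hct]
      exact hh.mono hsub
    have hz : (-Complex.I * (t : ℂ)) ≠ 0 := by simp [ht]
    have hv : ∀ s : ℝ, HasDerivAt
        (fun s : ℝ => Complex.exp (-Complex.I * (s : ℂ) * (t : ℂ)) / (-Complex.I * (t : ℂ)))
        (Complex.exp (-Complex.I * (s : ℂ) * (t : ℂ))) s := by
      intro s
      have h1 : HasDerivAt (fun s : ℝ => -Complex.I * (s : ℂ) * (t : ℂ))
          (-Complex.I * 1 * (t : ℂ)) s :=
        ((Complex.ofRealCLM.hasDerivAt (x := s)).const_mul (-Complex.I)).mul_const (t : ℂ)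
      have h2 := h1.cexp.div_const (-Complex.I * (t : ℂ))
      refine h2.congr_deriv ?_
      rw [mul_one, mul_div_assoc, div_self hz, mul_one]
    have hparts := intervalIntegral.integral_mul_deriv_eq_deriv_mul (a := d) (b := c)
      (u := g) (u' := h)
      (fun s hs => hg s (hsub (by rwa [uIcc_of_le hct] at hs))) (fun s _ => hv s) hdc_int
      (hecont.intervalIntegrable _ _)
    have hvn : ∀ s : ℝ,
        ‖Complex.exp (-Complex.I * (s : ℂ) * (t : ℂ)) / (-Complex.I * (t : ℂ))‖ = d := by
      intro s
      rw [norm_div, norm_exp_neg_I_mul]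
      simp [hd]
    have h0uIcc : (0 : ℝ) ∉ uIcc d c := by
      rw [uIcc_of_le hct]
      exact fun hmem => absurd hmem.1 (not_le.2 hd0)
    have hhint : ‖∫ s in d..c, h s *
        (Complex.exp (-Complex.I * (s : ℂ) * (t : ℂ)) / (-Complex.I * (t : ℂ)))‖
        ≤ 2 * B * d ^ (-1 / 2 : ℝ) * d := by
      calc _ ≤ ∫ s in d..c, (B * s ^ (-3 / 2 : ℝ)) * d := by
            refine intervalIntegral.norm_integral_le_of_norm_le hct
              (Eventually.of_forall fun s hs => ?_) ?_
            · rw [norm_mul, hvn]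
              exact mul_le_mul_of_nonneg_right (hB s ⟨hd0.trans hs.1, hs.2⟩) hd0.le
            · exact ((intervalIntegral.intervalIntegrable_rpow (Or.inr h0uIcc)).const_mul
                B).mul_const d
        _ = 2 * B * (d ^ (-1 / 2 : ℝ) - c ^ (-1 / 2 : ℝ)) * d := by
            rw [intervalIntegral.integral_mul_const, intervalIntegral.integral_const_mul,
              integral_rpow (Or.inr ⟨by norm_num, h0uIcc⟩)]
            norm_num
            left
            ring
        _ ≤ _ := by
            gcongr
            have : 0 ≤ c ^ (-1 / 2 : ℝ) := by positivity
            linarith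
    have hdd : d ^ (-1 / 2 : ℝ) * d = |t| ^ (-1 / 2 : ℝ) := by
      rw [← hhalf, ← Real.rpow_add_one hd0.ne']
      norm_num
    have hcd : c ^ (-1 / 2 : ℝ) ≤ d ^ (-1 / 2 : ℝ) :=
      Real.rpow_le_rpow_of_nonpos hd0 hct (by norm_num)
    have far : ‖∫ s in d..c, g s * Complex.exp (-Complex.I * (s : ℂ) * (t : ℂ))‖
        ≤ (2 * A + 2 * B) * |t| ^ (-1 / 2 : ℝ) := by
      rw [hparts]
      have e1 : ‖g c * (Complex.exp (-Complex.I * (c : ℂ) * (t : ℂ)) / (-Complex.I * (t : ℂ)))‖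
          ≤ A * d ^ (-1 / 2 : ℝ) * d := by
        rw [norm_mul, hvn]
        gcongr
        exact (hA c ⟨hc, le_rfl⟩).trans (by gcongr)
      have e2 : ‖g d * (Complex.exp (-Complex.I * (d : ℂ) * (t : ℂ)) / (-Complex.I * (t : ℂ)))‖
          ≤ A * d ^ (-1 / 2 : ℝ) * d := by
        rw [norm_mul, hvn]
        gcongr
        exact hA d ⟨hd0, hct⟩
      refine (norm_sub_le _ _).trans ((add_le_add (norm_sub_le _ _) le_rfl).trans ?_)
      rw [← hdd]
      linarith
    have hsplit := intervalIntegral.integral_add_adjacent_intervals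
      (hei.mono_set (c := 0) (d := d) (by
        rw [uIcc_of_le hd0.le, uIcc_of_le hc.le]; exact Icc_subset_Icc le_rfl hct))
      (hei.mono_set (c := d) (d := c) (by
        rw [uIcc_of_le hct, uIcc_of_le hc.le]; exact Icc_subset_Icc hd0.le le_rfl))
    rw [← hsplit]
    refine (norm_add_le _ _).trans ?_
    have := near d hd0.le hct
    rw [hhalf] at this
    linarith

open Set in
theorem oscillatory_integral_bound_left {a b A B : ℝ} (hab : a < b) {g h : ℝ → ℂ}
    (hg : ∀ s ∈ Ioc a b, HasDerivAt g (h s) s) (hh : ContinuousOn h (Ioc a b))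
    (hA : ∀ s ∈ Ioc a b, ‖g s‖ ≤ A * |s - a| ^ (-1 / 2 : ℝ))
    (hB : ∀ s ∈ Ioc a b, ‖h s‖ ≤ B * |s - a| ^ (-3 / 2 : ℝ)) :
    IntervalIntegrable g volume a b ∧ ∀ t : ℝ, t ≠ 0 →
      ‖∫ s in a..b, g s * Complex.exp (-Complex.I * (s : ℂ) * (t : ℂ))‖
        ≤ (4 * A + 2 * B) * |t| ^ (-1 / 2 : ℝ) := by
  have hmem : ∀ s ∈ Ioc 0 (b - a), a + s ∈ Ioc a b := fun s hs =>
    ⟨by linarith [hs.1], by linarith [hs.2]⟩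
  obtain ⟨hi, hb⟩ := oscillatory_integral_bound (sub_pos.2 hab) (A := A) (B := B)
    (g := fun s => g (a + s)) (h := fun s => h (a + s))
    (fun s hs => (hg _ (hmem s hs)).comp_const_add a s)
    (hh.comp (by fun_prop) hmem)
    (fun s hs => by simpa [abs_of_pos hs.1] using hA _ (hmem s hs))
    (fun s hs => by simpa [abs_of_pos hs.1] using hB _ (hmem s hs))
  refine ⟨?_, fun t ht => ?_⟩
  · have := hi.comp_sub_right a
    simpa using this
  · have h1 := intervalIntegral.integral_comp_add_left (a := 0) (b := b - a)
      (fun s : ℝ => g s * Complex.exp (-Complex.I * (s : ℂ) * (t : ℂ))) a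
    simp only [add_zero, add_sub_cancel] at h1
    have h2 : ∀ s : ℝ, g (a + s) * Complex.exp (-Complex.I * ((a + s : ℝ) : ℂ) * (t : ℂ))
        = Complex.exp (-Complex.I * (a : ℂ) * (t : ℂ)) *
          (g (a + s) * Complex.exp (-Complex.I * (s : ℂ) * (t : ℂ))) := by
      intro s
      rw [mul_left_comm, ← Complex.exp_add]
      push_cast
      ring_nf
    rw [← h1]
    simp only [h2]
    rw [intervalIntegral.integral_const_mul, norm_mul, Complex.norm_exp]
    simpa using hb t ht

open Set in
theorem oscillatory_integral_bound_right {a b A B : ℝ} (hab : a < b) {g h : ℝ → ℂ}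
    (hg : ∀ s ∈ Ico a b, HasDerivAt g (h s) s) (hh : ContinuousOn h (Ico a b))
    (hA : ∀ s ∈ Ico a b, ‖g s‖ ≤ A * |s - b| ^ (-1 / 2 : ℝ))
    (hB : ∀ s ∈ Ico a b, ‖h s‖ ≤ B * |s - b| ^ (-3 / 2 : ℝ)) :
    IntervalIntegrable g volume a b ∧ ∀ t : ℝ, t ≠ 0 →
      ‖∫ s in a..b, g s * Complex.exp (-Complex.I * (s : ℂ) * (t : ℂ))‖
        ≤ (4 * A + 2 * B) * |t| ^ (-1 / 2 : ℝ) := by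
  have hmem : ∀ s ∈ Ioc (-b) (-a), -s ∈ Ico a b := fun s hs =>
    ⟨by linarith [hs.2], by linarith [hs.1]⟩
  have habs : ∀ s : ℝ, |-s - b| = |s - -b| := fun s => by
    rw [← abs_neg]
    ring_nf
  obtain ⟨hi, hb⟩ := oscillatory_integral_bound_left (neg_lt_neg hab) (A := A) (B := B)
    (g := fun s => g (-s)) (h := fun s => -h (-s))
    (fun s hs => by
      simpa [Function.comp_def] using (hg _ (hmem s hs)).scomp s (hasDerivAt_neg s))
    (hh.comp (by fun_prop) hmem).neg
    (fun s hs => by simpa only [habs] using hA _ (hmem s hs))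
    (fun s hs => by simpa only [habs, norm_neg] using hB _ (hmem s hs))
  refine ⟨?_, fun t ht => ?_⟩
  · have := (hi.comp_sub_left 0).symm
    simpa using this
  · have h1 := intervalIntegral.integral_comp_neg (a := -b) (b := -a)
      (fun s : ℝ => g s * Complex.exp (-Complex.I * (s : ℂ) * (t : ℂ)))
    simp only [neg_neg] at h1
    rw [← h1]
    simpa using hb (-t) (neg_ne_zero.2 ht)

theorem integrable_fourier_of_contDiff {F : ℝ → ℂ} (hF : ContDiff ℝ (⊤ : ℕ∞) F)
    (hFs : HasCompactSupport F) :
    Integrable (fun t : ℝ => ∫ ω : ℝ, F ω * Complex.exp (-Complex.I * (ω : ℂ) * (t : ℂ))) := by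
  have hpi : (2 * Real.pi) ≠ 0 := by positivity
  have h1 : Integrable (fun t : ℝ =>
      (FourierTransform.fourier (hFs.toSchwartzMap hF)) (t / (2 * Real.pi))) :=
    (SchwartzMap.integrable (μ := (volume : Measure ℝ))
      (FourierTransform.fourier (hFs.toSchwartzMap hF))).comp_div hpi
  refine h1.congr (Eventually.of_forall fun t => ?_)
  simp only [SchwartzMap.fourier_coe]
  rw [Real.fourier_eq']
  refine integral_congr_ae (Eventually.of_forall fun ω => ?_)
  simp only [smul_eq_mul]
  rw [mul_comm]
  congr 2
  simp only [RCLike.inner_apply, conj_trivial]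
  push_cast
  have : (Real.pi : ℂ) ≠ 0 := by exact_mod_cast Real.pi_ne_zero
  field_simp

theorem contDiff_kCl_of_pos {m ε : ℝ} (hε : 0 < ε) :
    ContDiff ℝ (⊤ : ℕ∞) fun ω : ℝ => kCl m ((ω : ℂ) + Complex.I * (ε : ℂ)) := by
  have hk : (fun ω : ℝ => kCl m ((ω : ℂ) + Complex.I * (ε : ℂ))) = fun ω : ℝ =>
      Complex.I * (((m : ℂ) ^ 2 - ((ω : ℂ) + Complex.I * (ε : ℂ)) ^ 2) ^ ((1 : ℂ) / 2)) := by
    ext ω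
    simp [kCl, hε]
  rw [hk, contDiff_iff_contDiffAt]
  intro ω
  have hlin : ContDiff ℝ (⊤ : ℕ∞) fun ω : ℝ => (ω : ℂ) + Complex.I * (ε : ℂ) :=
    Complex.ofRealCLM.contDiff.add contDiff_const
  have hslit : ((m : ℂ) ^ 2 - ((ω : ℂ) + Complex.I * (ε : ℂ)) ^ 2) ∈ Complex.slitPlane := by
    rw [Complex.mem_slitPlane_iff]
    by_cases h0 : ω = 0
    · left
      simp [h0, pow_two, Complex.mul_re]
      nlinarith [sq_nonneg m, mul_pos hε hε]
    · right
      simp [pow_two, Complex.mul_im]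
      intro h
      rcases mul_eq_zero.1 (show ω * ε = 0 by linarith) with h | h
      · exact h0 h
      · exact hε.ne' h
  have han : AnalyticAt ℂ (fun w : ℂ => Complex.I * (((m : ℂ) ^ 2 - w ^ 2) ^ ((1 : ℂ) / 2)))
      ((ω : ℂ) + Complex.I * (ε : ℂ)) :=
    analyticAt_const.mul (((analyticAt_const.sub (analyticAt_id.pow 2))).cpow
      analyticAt_const hslit)
  exact ContDiffAt.comp (g := fun w : ℂ => Complex.I * (((m : ℂ) ^ 2 - w ^ 2) ^ ((1 : ℂ) / 2)))
    ω (han.contDiffAt.restrict_scalars ℝ) hlin.contDiffAt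

theorem kCl_ofReal (m ω : ℝ) : kCl m (ω : ℂ) =
    if m ≤ ω then ((Real.sqrt (ω ^ 2 - m ^ 2) : ℝ) : ℂ)
    else if ω ≤ -m then -((Real.sqrt (ω ^ 2 - m ^ 2) : ℝ) : ℂ)
    else Complex.I * ((Real.sqrt (m ^ 2 - ω ^ 2) : ℝ) : ℂ) := by
  simp [kCl]

theorem continuous_kCl_ofReal (m : ℝ) : Continuous fun ω : ℝ => kCl m (ω : ℂ) := by
  simp only [kCl_ofReal]
  refine Continuous.if_le (by fun_prop) ?_ continuous_const continuous_id ?_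
  · refine Continuous.if_le (by fun_prop) (by fun_prop) continuous_id continuous_const ?_
    rintro ω (rfl : ω = -m)
    simp
  · rintro ω rfl
    simp

theorem kCl_ofReal_sq {m : ℝ} (hm : 0 < m) (ω : ℝ) : kCl m (ω : ℂ) ^ 2 = ((ω ^ 2 - m ^ 2 : ℝ) : ℂ) := by
  rw [kCl_ofReal]
  split_ifs with h1 h2
  · rw [← Complex.ofReal_pow, Real.sq_sqrt (by nlinarith)]
  · rw [neg_sq, ← Complex.ofReal_pow, Real.sq_sqrt (by nlinarith)]
  · rw [mul_pow, ← Complex.ofReal_pow, Real.sq_sqrt (by nlinarith), Complex.I_sq]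
    push_cast
    ring

theorem hasDerivAt_kCl_ofReal {m ω : ℝ} (hm : 0 < m) (h1 : ω ≠ m) (h2 : ω ≠ -m) :
    HasDerivAt (fun ω : ℝ => kCl m (ω : ℂ)) ((ω : ℂ) / kCl m (ω : ℂ)) ω := by
  have hsq1 : HasDerivAt (fun x : ℝ => x ^ 2 - m ^ 2) (2 * ω) ω := by
    simpa using (hasDerivAt_pow 2 ω).sub_const (m ^ 2)
  have hsq2 : HasDerivAt (fun x : ℝ => m ^ 2 - x ^ 2) (-(2 * ω)) ω := by
    simpa using (hasDerivAt_pow 2 ω).const_sub (m ^ 2)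
  rcases lt_or_gt_of_ne h1 with h1 | h1
  · rcases lt_or_gt_of_ne h2 with h2 | h2
    · have hpos : 0 < ω ^ 2 - m ^ 2 := by nlinarith
      have hs := Real.sqrt_pos.2 hpos
      have hd := ((hsq1.sqrt hpos.ne').ofReal_comp).neg
      have hv : kCl m (ω : ℂ) = -((Real.sqrt (ω ^ 2 - m ^ 2) : ℝ) : ℂ) := by
        rw [kCl_ofReal, if_neg (not_le.2 h1), if_pos h2.le]
      have hs' : ((Real.sqrt (ω ^ 2 - m ^ 2) : ℝ) : ℂ) ≠ 0 := by exact_mod_cast hs.ne'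
      rw [hv]
      refine (hd.congr_deriv ?_).congr_of_eventuallyEq ?_
      · push_cast
        field_simp
      · filter_upwards [eventually_lt_nhds h1, eventually_lt_nhds h2] with x hx1 hx2
        simp [kCl_ofReal, not_le.2 hx1, hx2.le]
    · have hpos : 0 < m ^ 2 - ω ^ 2 := by nlinarith
      have hs := Real.sqrt_pos.2 hpos
      have hd := ((hsq2.sqrt hpos.ne').ofReal_comp).const_mul Complex.I
      have hv : kCl m (ω : ℂ) = Complex.I * ((Real.sqrt (m ^ 2 - ω ^ 2) : ℝ) : ℂ) := by
        rw [kCl_ofReal, if_neg (not_le.2 h1), if_neg (not_le.2 h2)]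
      have hs' : ((Real.sqrt (m ^ 2 - ω ^ 2) : ℝ) : ℂ) ≠ 0 := by exact_mod_cast hs.ne'
      rw [hv]
      refine (hd.congr_deriv ?_).congr_of_eventuallyEq ?_
      · have := Complex.I_ne_zero
        push_cast
        field_simp
        simp
      · filter_upwards [eventually_lt_nhds h1, eventually_gt_nhds h2] with x hx1 hx2
        simp [kCl_ofReal, not_le.2 hx1, not_le.2 hx2]
  · have hpos : 0 < ω ^ 2 - m ^ 2 := by nlinarith
    have hs := Real.sqrt_pos.2 hpos
    have hd := (hsq1.sqrt hpos.ne').ofReal_comp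
    have hv : kCl m (ω : ℂ) = ((Real.sqrt (ω ^ 2 - m ^ 2) : ℝ) : ℂ) := by
      rw [kCl_ofReal, if_pos h1.le]
    have hs' : ((Real.sqrt (ω ^ 2 - m ^ 2) : ℝ) : ℂ) ≠ 0 := by exact_mod_cast hs.ne'
    rw [hv]
    refine (hd.congr_deriv ?_).congr_of_eventuallyEq ?_
    · push_cast
      field_simp
    · filter_upwards [eventually_gt_nhds h1] with x hx1
      simp [kCl_ofReal, hx1.le]

theorem kCl_ofReal_ne_zero {m ω : ℝ} (hm : 0 < m) (h1 : ω ≠ m) (h2 : ω ≠ -m) :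
    kCl m (ω : ℂ) ≠ 0 := by
  intro h
  have hsq := kCl_ofReal_sq hm ω
  rw [h, zero_pow two_ne_zero] at hsq
  have h0 : ω ^ 2 - m ^ 2 = 0 := by exact_mod_cast hsq.symm
  rcases sq_eq_sq_iff_eq_or_eq_neg.1 (sub_eq_zero.1 h0) with h | h
  · exact h1 h
  · exact h2 h

theorem norm_kCl_ofReal_sq {m : ℝ} (hm : 0 < m) (ω : ℝ) :
    ‖kCl m (ω : ℂ)‖ ^ 2 = |ω - m| * |ω + m| := by
  rw [← norm_pow, kCl_ofReal_sq hm, Complex.norm_real, Real.norm_eq_abs, ← abs_mul]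
  ring_nf

theorem norm_div_le_of_mul_le_sq {p w : ℂ} {C m d r : ℝ} (n : ℕ) (hm : 0 < m) (hd : 0 < d)
    (hp : ‖p‖ ≤ C) (hw : m * d ≤ ‖w‖ ^ 2) (hr : r = -n / 2) :
    ‖p / w ^ n‖ ≤ C * m ^ r * d ^ r := by
  have hw0 : 0 < ‖w‖ := by
    rcases (norm_nonneg w).eq_or_lt with h | h
    · rw [← h] at hw
      nlinarith [mul_pos hm hd]
    · exact h
  have hC : 0 ≤ C := (norm_nonneg p).trans hp
  have h1 : (‖w‖ ^ 2) ^ r = (‖w‖ ^ n)⁻¹ := by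
    rw [← Real.rpow_natCast ‖w‖ 2, ← Real.rpow_mul hw0.le, ← Real.rpow_natCast ‖w‖ n,
      ← Real.rpow_neg hw0.le, hr]
    congr 1
    push_cast
    ring
  have h2 : (‖w‖ ^ n)⁻¹ ≤ m ^ r * d ^ r := by
    rw [← h1, ← Real.mul_rpow hm.le hd.le]
    refine Real.rpow_le_rpow_of_nonpos (mul_pos hm hd) hw ?_
    rw [hr]
    have : (0 : ℝ) ≤ n := n.cast_nonneg
    linarith
  rw [norm_div, norm_pow, div_eq_mul_inv, mul_assoc]
  exact mul_le_mul hp h2 (by positivity) hC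

theorem integrable_of_norm_le_of_norm_le_rpow {f : ℝ → ℂ} (hf : Continuous f) {C D : ℝ}
    (hC : ∀ t, ‖f t‖ ≤ C) (hD : ∀ t, t ≠ 0 → ‖f t‖ ≤ D * |t| ^ (-3 / 2 : ℝ)) :
    Integrable f := by
  have hC0 : 0 ≤ C := (norm_nonneg _).trans (hC 0)
  have hD0 : 0 ≤ D := by simpa using (norm_nonneg _).trans (hD 1 one_ne_zero)
  have hint : Integrable (fun t : ℝ => (C + D) * 2 ^ (3 / 2 : ℝ) * (1 + ‖t‖) ^ (-(3 / 2) : ℝ)) :=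
    (integrable_one_add_norm (by norm_num)).const_mul _
  refine hint.mono' hf.aestronglyMeasurable (Eventually.of_forall fun t => ?_)
  rw [Real.norm_eq_abs]
  have h2 : ∀ u : ℝ, 0 ≤ u → (2 : ℝ) ^ (3 / 2 : ℝ) * (2 * u) ^ (-(3 / 2) : ℝ)
      = u ^ (-(3 / 2) : ℝ) := by
    intro u hu
    rw [Real.mul_rpow zero_le_two hu, ← mul_assoc, ← Real.rpow_add two_pos]
    norm_num
  rw [mul_assoc]
  rcases le_total |t| 1 with h | h
  · have h3 : (1 : ℝ) ≤ 2 ^ (3 / 2 : ℝ) * (1 + |t|) ^ (-(3 / 2) : ℝ) := by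
      calc (1 : ℝ) = 2 ^ (3 / 2 : ℝ) * (2 * 1) ^ (-(3 / 2) : ℝ) := by
            rw [h2 1 zero_le_one, Real.one_rpow]
        _ ≤ _ := by
          refine mul_le_mul_of_nonneg_left ?_ (by positivity)
          exact Real.rpow_le_rpow_of_nonpos (by positivity) (by linarith) (by norm_num)
    nlinarith [hC t]
  · have ht : t ≠ 0 := by
      rintro rfl
      norm_num at h
    have h3 : |t| ^ (-3 / 2 : ℝ) ≤ 2 ^ (3 / 2 : ℝ) * (1 + |t|) ^ (-(3 / 2) : ℝ) := by
      rw [show (-3 / 2 : ℝ) = -(3 / 2) by norm_num, ← h2 _ (abs_nonneg t)]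
      refine mul_le_mul_of_nonneg_left ?_ (by positivity)
      exact Real.rpow_le_rpow_of_nonpos (by positivity) (by linarith) (by norm_num)
    have h4 : 0 ≤ 2 ^ (3 / 2 : ℝ) * (1 + |t|) ^ (-(3 / 2) : ℝ) := by positivity
    calc ‖f t‖ ≤ D * |t| ^ (-3 / 2 : ℝ) := hD t ht
      _ ≤ D * (2 ^ (3 / 2 : ℝ) * (1 + |t|) ^ (-(3 / 2) : ℝ)) := by gcongr
      _ ≤ _ := by gcongr; linarith

theorem continuous_fourier_of_integrable {F : ℝ → ℂ} (hF : Integrable F) :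
    Continuous (fun t : ℝ => ∫ ω : ℝ, F ω * Complex.exp (-Complex.I * (ω : ℂ) * (t : ℂ))) := by
  refine continuous_of_dominated (bound := fun ω => ‖F ω‖) (fun t => ?_)
    (fun t => Eventually.of_forall fun ω => ?_) hF.norm (Eventually.of_forall fun ω => ?_)
  · exact hF.aestronglyMeasurable.mul (by fun_prop : Continuous fun ω : ℝ =>
      Complex.exp (-Complex.I * (ω : ℂ) * (t : ℂ))).aestronglyMeasurable
  · rw [norm_mul, norm_exp_neg_I_mul, mul_one]
  · fun_prop

theorem integrable_fourier_of_deriv_bounds {F G H : ℝ → ℂ} {m A B : ℝ} (hm : 0 < m)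
    (hFc : Continuous F) (hFs : HasCompactSupport F)
    (hF : ∀ ω, ω ≠ m → ω ≠ -m → HasDerivAt F (G ω) ω)
    (hG : ∀ ω, ω ≠ m → ω ≠ -m → HasDerivAt G (H ω) ω)
    (hH : ∀ ω, ω ≠ m → ω ≠ -m → ContinuousAt H ω)
    (hGr : ∀ ω, 0 ≤ ω → ω ≠ m → ‖G ω‖ ≤ A * |ω - m| ^ (-1 / 2 : ℝ))
    (hGl : ∀ ω, ω ≤ 0 → ω ≠ -m → ‖G ω‖ ≤ A * |ω - -m| ^ (-1 / 2 : ℝ))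
    (hHr : ∀ ω, 0 ≤ ω → ω ≠ m → ‖H ω‖ ≤ B * |ω - m| ^ (-3 / 2 : ℝ))
    (hHl : ∀ ω, ω ≤ 0 → ω ≠ -m → ‖H ω‖ ≤ B * |ω - -m| ^ (-3 / 2 : ℝ)) :
    Integrable (fun t : ℝ => ∫ ω : ℝ, F ω * Complex.exp (-Complex.I * (ω : ℂ) * (t : ℂ))) := by
  have hFi : Integrable F := hFc.integrable_of_hasCompactSupport hFs
  obtain ⟨R₀, hR₀⟩ := hFs.isCompact.isBounded.subset_closedBall 0
  obtain ⟨R, hR1, hR2⟩ : ∃ R, R₀ < R ∧ m < R :=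
    ⟨max R₀ m + 1, by linarith [le_max_left R₀ m], by linarith [le_max_right R₀ m]⟩
  have hzero : ∀ ω, R ≤ |ω| → F ω = 0 := by
    intro ω hω
    by_contra h
    have := hR₀ (subset_tsupport F h)
    rw [mem_closedBall_zero_iff, Real.norm_eq_abs] at this
    linarith
  obtain ⟨i1, b1⟩ := oscillatory_integral_bound_right (a := -R) (b := -m) (by linarith)
    (fun s hs => hG s (by linarith [hs.2]) hs.2.ne)
    (fun s hs => (hH s (by linarith [hs.2]) hs.2.ne).continuousWithinAt)
    (fun s hs => hGl s (by linarith [hs.2]) hs.2.ne)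
    (fun s hs => hHl s (by linarith [hs.2]) hs.2.ne)
  obtain ⟨i2, b2⟩ := oscillatory_integral_bound_left (a := -m) (b := 0) (by linarith)
    (fun s hs => hG s (by linarith [hs.2]) hs.1.ne')
    (fun s hs => (hH s (by linarith [hs.2]) hs.1.ne').continuousWithinAt)
    (fun s hs => hGl s hs.2 hs.1.ne')
    (fun s hs => hHl s hs.2 hs.1.ne')
  obtain ⟨i3, b3⟩ := oscillatory_integral_bound_right (a := 0) (b := m) hm
    (fun s hs => hG s hs.2.ne (by linarith [hs.1]))
    (fun s hs => (hH s hs.2.ne (by linarith [hs.1])).continuousWithinAt)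
    (fun s hs => hGr s hs.1 hs.2.ne)
    (fun s hs => hHr s hs.1 hs.2.ne)
  obtain ⟨i4, b4⟩ := oscillatory_integral_bound_left (a := m) (b := R) hR2
    (fun s hs => hG s hs.1.ne' (by linarith [hs.1]))
    (fun s hs => (hH s hs.1.ne' (by linarith [hs.1])).continuousWithinAt)
    (fun s hs => hGr s (by linarith [hs.1]) hs.1.ne')
    (fun s hs => hHr s (by linarith [hs.1]) hs.1.ne')
  refine integrable_of_norm_le_of_norm_le_rpow (continuous_fourier_of_integrable hFi)
    (C := ∫ ω, ‖F ω‖) (D := 4 * (4 * A + 2 * B)) (fun t => ?_) (fun t ht => ?_)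
  · refine (norm_integral_le_integral_norm _).trans_eq ?_
    simp only [norm_mul, norm_exp_neg_I_mul, mul_one]
  · have he : Continuous fun ω : ℝ => Complex.exp (-Complex.I * (ω : ℂ) * (t : ℂ)) := by
      fun_prop
    have hde : ∀ ω : ℝ, HasDerivAt
        (fun ω : ℝ => Complex.exp (-Complex.I * (ω : ℂ) * (t : ℂ)))
        (Complex.exp (-Complex.I * (ω : ℂ) * (t : ℂ)) * (-Complex.I * 1 * (t : ℂ))) ω :=
      fun ω => (((Complex.ofRealCLM.hasDerivAt (x := ω)).const_mul
        (-Complex.I)).mul_const (t : ℂ)).cexp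
    have j1 := i1.mul_continuousOn he.continuousOn
    have j2 := i2.mul_continuousOn he.continuousOn
    have j3 := i3.mul_continuousOn he.continuousOn
    have j4 := i4.mul_continuousOn he.continuousOn
    have j := ((j1.trans j2).trans j3).trans j4
    have hFe : IntervalIntegrable (fun ω : ℝ =>
        F ω * (Complex.exp (-Complex.I * (ω : ℂ) * (t : ℂ)) * (-Complex.I * 1 * (t : ℂ))))
        volume (-R) R :=
      (hFc.mul (he.mul continuous_const)).intervalIntegrable _ _
    have hparts := integral_eq_of_hasDerivAt_off_countable
      (fun ω : ℝ => F ω * Complex.exp (-Complex.I * (ω : ℂ) * (t : ℂ))) _ (a := -R) (b := R)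
      (s := {m, -m}) (by simp) (hFc.mul he).continuousOn
      (fun ω hω => by
        simp only [Set.mem_sdiff, Set.mem_insert_iff, Set.mem_singleton_iff, not_or] at hω
        exact (hF ω hω.2.1 hω.2.2).mul (hde ω)) (j.add hFe)
    have hfull : ∫ ω in (-R)..R, F ω * Complex.exp (-Complex.I * (ω : ℂ) * (t : ℂ))
        = ∫ ω : ℝ, F ω * Complex.exp (-Complex.I * (ω : ℂ) * (t : ℂ)) := by
      refine intervalIntegral.integral_eq_integral_of_support_subset fun ω hω => ?_
      have h1 : F ω ≠ 0 := left_ne_zero_of_mul hω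
      have h2 : |ω| < R := by
        by_contra h
        exact h1 (hzero ω (not_lt.1 h))
      exact ⟨(abs_lt.1 h2).1, (abs_lt.1 h2).2.le⟩
    rw [intervalIntegral.integral_add j hFe, hzero R (le_abs_self R),
      hzero (-R) (by rw [abs_neg]; exact le_abs_self R)] at hparts
    simp only [← mul_assoc] at hparts
    rw [intervalIntegral.integral_mul_const, intervalIntegral.integral_mul_const,
      intervalIntegral.integral_mul_const, hfull] at hparts
    rw [← intervalIntegral.integral_add_adjacent_intervals ((j1.trans j2).trans j3) j4,
      ← intervalIntegral.integral_add_adjacent_intervals (j1.trans j2) j3,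
      ← intervalIntegral.integral_add_adjacent_intervals j1 j2] at hparts
    have key := congrArg norm (eq_neg_of_add_eq_zero_right
      (hparts.trans (by simp : _ = (0 : ℂ))))
    simp only [norm_neg, norm_mul, Complex.norm_I, mul_one, Complex.norm_real,
      Real.norm_eq_abs] at key
    have hτ : 0 < |t| := abs_pos.2 ht
    have hle : ‖∫ ω : ℝ, F ω * Complex.exp (-Complex.I * (ω : ℂ) * (t : ℂ))‖ * |t|
        ≤ 4 * (4 * A + 2 * B) * |t| ^ (-1 / 2 : ℝ) := by
      rw [key]
      refine (norm_add_le _ _).trans ?_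
      refine (add_le_add_left (norm_add_le _ _) _).trans ?_
      refine (add_le_add_left (add_le_add_left (norm_add_le _ _) _) _).trans ?_
      linarith [b1 t ht, b2 t ht, b3 t ht, b4 t ht]
    have hpow : |t| ^ (-1 / 2 : ℝ) = |t| ^ (-3 / 2 : ℝ) * |t| := by
      rw [← Real.rpow_add_one hτ.ne']
      norm_num
    rw [hpow, ← mul_assoc] at hle
    exact le_of_mul_le_mul_right hle hτ

theorem integrable_fourier_kCl_ofReal {m : ℝ} (hm : 0 < m) {ζ : ℝ → ℂ}
    (hζ : ContDiff ℝ (⊤ : ℕ∞) ζ) (hζs : HasCompactSupport ζ) (X : ℂ) :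
    Integrable (fun t : ℝ => ∫ ω : ℝ, Complex.exp (Complex.I * kCl m (ω : ℂ) * X) * ζ ω
      * Complex.exp (-Complex.I * (ω : ℂ) * (t : ℂ))) := by
  set k : ℝ → ℂ := fun ω => kCl m (ω : ℂ) with hk
  have hkc : Continuous k := continuous_kCl_ofReal m
  have hζ1 : ContDiff ℝ (⊤ : ℕ∞) (deriv ζ) := (contDiff_infty_iff_deriv.1 hζ).2
  have hζ2 : Continuous (deriv (deriv ζ)) := hζ1.continuous_deriv (by simp)
  have hd1 : ∀ ω, HasDerivAt ζ (deriv ζ ω) ω := fun ω =>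
    (hζ.differentiable (by simp) ω).hasDerivAt
  have hd2 : ∀ ω, HasDerivAt (deriv ζ) (deriv (deriv ζ) ω) ω := fun ω =>
    (hζ1.differentiable (by simp) ω).hasDerivAt
  have hc0 := hζ.continuous
  have hc1 := hζ1.continuous
  set E : ℝ → ℂ := fun ω => Complex.exp (Complex.I * k ω * X) with hE
  have hEc : Continuous E := by fun_prop
  set P : ℝ → ℂ := fun ω => E ω * (Complex.I * X * ω * ζ ω + k ω * deriv ζ ω) with hP
  set Q : ℝ → ℂ := fun ω => E ω * ((Complex.I * X) ^ 2 * ω ^ 2 * k ω * ζ ω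
    + 2 * (Complex.I * X * ω * k ω ^ 2 * deriv ζ ω)
    + Complex.I * X * (k ω ^ 2 - ω ^ 2) * ζ ω + k ω ^ 3 * deriv (deriv ζ) ω) with hQ
  have hPc : Continuous P := by fun_prop
  have hQc : Continuous Q := by fun_prop
  have hPs : HasCompactSupport P :=
    ((hζs.mul_left (f := fun ω : ℝ => Complex.I * X * ω)).add
      (hζs.deriv.mul_left (f := k))).mul_left
  have hQs : HasCompactSupport Q :=
    ((((hζs.mul_left (f := fun ω : ℝ => (Complex.I * X) ^ 2 * ω ^ 2 * k ω)).add
      ((hζs.deriv.mul_left (f := fun ω : ℝ => Complex.I * X * ω * k ω ^ 2)).mul_left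
        (f := fun _ => 2))).add
      (hζs.mul_left (f := fun ω : ℝ => Complex.I * X * (k ω ^ 2 - ω ^ 2)))).add
      (hζs.deriv.deriv.mul_left (f := fun ω : ℝ => k ω ^ 3))).mul_left
  obtain ⟨C₁, hC₁⟩ := hPs.exists_bound_of_continuous hPc
  obtain ⟨C₂, hC₂⟩ := hQs.exists_bound_of_continuous hQc
  have hkd : ∀ ω, ω ≠ m → ω ≠ -m → HasDerivAt k ((ω : ℂ) / k ω) ω :=
    fun ω h1 h2 => hasDerivAt_kCl_ofReal hm h1 h2
  have hk0 : ∀ ω, ω ≠ m → ω ≠ -m → k ω ≠ 0 := fun ω h1 h2 => kCl_ofReal_ne_zero hm h1 h2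
  have hEd : ∀ ω, ω ≠ m → ω ≠ -m →
      HasDerivAt E (E ω * (Complex.I * ((ω : ℂ) / k ω) * X)) ω :=
    fun ω h1 h2 => (((hkd ω h1 h2).const_mul Complex.I).mul_const X).cexp
  have hkr : ∀ ω : ℝ, 0 ≤ ω → m * |ω - m| ≤ ‖k ω‖ ^ 2 := by
    intro ω hω
    rw [hk, norm_kCl_ofReal_sq hm, mul_comm]
    refine mul_le_mul_of_nonneg_left ?_ (abs_nonneg _)
    rw [abs_of_pos (by linarith)]
    linarith
  have hkl : ∀ ω : ℝ, ω ≤ 0 → m * |ω - -m| ≤ ‖k ω‖ ^ 2 := by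
    intro ω hω
    rw [hk, norm_kCl_ofReal_sq hm, sub_neg_eq_add]
    refine mul_le_mul_of_nonneg_right ?_ (abs_nonneg _)
    rw [abs_of_neg (by linarith)]
    linarith
  refine integrable_fourier_of_deriv_bounds (F := fun ω => E ω * ζ ω)
    (G := fun ω => P ω / k ω ^ 1) (H := fun ω => Q ω / k ω ^ 3)
    (A := C₁ * m ^ (-1 / 2 : ℝ)) (B := C₂ * m ^ (-3 / 2 : ℝ)) hm (hEc.mul hc0) hζs.mul_left
    (fun ω h1 h2 => ?_) (fun ω h1 h2 => ?_) (fun ω h1 h2 => ?_)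
    (fun ω h h1 => norm_div_le_of_mul_le_sq 1 hm (abs_pos.2 (sub_ne_zero.2 h1)) (hC₁ ω)
      (hkr ω h) (by norm_num))
    (fun ω h h1 => norm_div_le_of_mul_le_sq 1 hm (abs_pos.2 (sub_ne_zero.2 h1)) (hC₁ ω)
      (hkl ω h) (by norm_num))
    (fun ω h h1 => norm_div_le_of_mul_le_sq 3 hm (abs_pos.2 (sub_ne_zero.2 h1)) (hC₂ ω)
      (hkr ω h) (by norm_num))
    (fun ω h h1 => norm_div_le_of_mul_le_sq 3 hm (abs_pos.2 (sub_ne_zero.2 h1)) (hC₂ ω)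
      (hkl ω h) (by norm_num))
  · refine ((hEd ω h1 h2).mul (hd1 ω)).congr_deriv ?_
    have := hk0 ω h1 h2
    simp only [hP]
    field_simp
  · have hne := hk0 ω h1 h2
    have hid : HasDerivAt (fun ω : ℝ => Complex.I * X * (ω : ℂ)) (Complex.I * X * 1) ω :=
      (Complex.ofRealCLM.hasDerivAt (x := ω)).const_mul _
    have hPd := (hEd ω h1 h2).mul ((hid.mul (hd1 ω)).add ((hkd ω h1 h2).mul (hd2 ω)))
    simp only [pow_one]
    refine (hPd.div (hkd ω h1 h2) hne).congr_deriv ?_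
    simp only [hQ, Pi.mul_apply, Pi.add_apply]
    field_simp
    ring
  · exact hQc.continuousAt.div (hkc.pow 3).continuousAt (pow_ne_zero 3 (hk0 ω h1 h2))

/-- for fixed `x ∈ ℝ`, `ε ≥ 0` and a cutoff `ζ ∈ C_c^∞(ℝ)`, the function
`t ↦ (1/2π)∫ e^{ik(ω+iε)|x|} ζ(ω) e^{−iωt} dω` is in `L¹(ℝ)`. -/
theorem multiplicator_L1
    (m : ℝ) (hm : 0 < m)
    (ζ : ℝ → ℂ) (hζ : ContDiff ℝ (⊤ : ℕ∞) ζ) (hζsupp : HasCompactSupport ζ)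
    (x : ℝ) (ε : ℝ) (hε : 0 ≤ ε) :
    Integrable (fun t : ℝ => ((1 / (2 * Real.pi) : ℝ) : ℂ)
      * ∫ ω : ℝ, Complex.exp (Complex.I * kCl m ((ω:ℂ) + Complex.I * (ε:ℂ))
            * ((|x| : ℝ) : ℂ))
          * ζ ω * Complex.exp (-Complex.I * (ω:ℂ) * (t:ℂ))) (volume : Measure ℝ) := by
  refine Integrable.const_mul ?_ _
  rcases hε.eq_or_lt with rfl | hε
  · simpa using integrable_fourier_kCl_ofReal hm hζ hζsupp ((|x| : ℝ) : ℂ)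
  · exact integrable_fourier_of_contDiff
      (((contDiff_const.mul (contDiff_kCl_of_pos hε)).mul contDiff_const).cexp.mul hζ)
      hζsupp.mul_left
end
end

section
/- Let m>0, let k denote the continuous extension to the closed upper half-plane of the branch of √(z²−m²) with Im k(z)>0 for Im z>0, let ζ∈C_c^∞(ℝ), and fix x∈ℝ. For ε≥0 set M̌_{x,ε}(t) = (1/2π)∫_ℝ e^{ik(ω+iε)|x|} ζ(ω) e^{−iωt} dω. Then ‖M̌_{x,ε} − M̌_{x,0}‖_{L¹(ℝ)} → 0 as ε→0+. -/
open MeasureTheory Filter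
open scoped ENNReal Topology

noncomputable section

/-- The principal square root of `m² - w²`. -/
def sqrtDisc (m : ℝ) (w : ℂ) : ℂ := ((m : ℂ) ^ 2 - w ^ 2) ^ ((1 : ℂ) / 2)

/-- The holomorphic symbol `exp (-a √(m² - w²))` on the upper half-plane. -/
def symb (a m : ℝ) (w : ℂ) : ℂ := Complex.exp (-((a : ℂ) * sqrtDisc m w))

/-- The first complex derivative of `symb`. -/
def symbDeriv (a m : ℝ) (w : ℂ) : ℂ := a * (w / sqrtDisc m w) * symb a m w

/-- The second complex derivative of `symb`. -/
def symbDeriv₂ (a m : ℝ) (w : ℂ) : ℂ :=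
  (a * (1 / sqrtDisc m w + w ^ 2 / sqrtDisc m w ^ 3)
    + a ^ 2 * (w ^ 2 / sqrtDisc m w ^ 2)) * symb a m w

lemma disc_mem_slitPlane {m : ℝ} (hm : 0 < m) {w : ℂ} (hw : 0 < w.im) :
    (m : ℂ) ^ 2 - w ^ 2 ∈ Complex.slitPlane := by
  rw [Complex.mem_slitPlane_iff]
  have h1 : ((m : ℂ) ^ 2 - w ^ 2).re = m ^ 2 - w.re ^ 2 + w.im ^ 2 := by
    simp [pow_two]; ring
  have h2 : ((m : ℂ) ^ 2 - w ^ 2).im = -(2 * w.re * w.im) := by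
    simp [pow_two]; ring
  rw [h1, h2]
  by_cases h : w.re = 0
  · left; rw [h]; nlinarith [pow_pos hm 2, sq_nonneg w.im]
  · right
    simp [h, hw.ne']

lemma norm_sqrtDisc (m : ℝ) (w : ℂ) : ‖sqrtDisc m w‖ = ‖(m : ℂ) ^ 2 - w ^ 2‖ ^ (1 / 2 : ℝ) := by
  have h := Complex.norm_cpow_real ((m : ℂ) ^ 2 - w ^ 2) (1 / 2)
  rw [← h, sqrtDisc]
  push_cast
  rfl

lemma re_sqrt_nonneg (z : ℂ) : 0 ≤ (z ^ ((1 : ℂ) / 2)).re := by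
  rcases eq_or_ne z 0 with rfl | hz
  · simp
  have h : z ^ ((1 : ℂ) / 2) =
      Complex.exp (((Complex.log z).re / 2 : ℝ) + ((z.arg / 2 : ℝ) : ℂ) * Complex.I) := by
    rw [Complex.cpow_def_of_ne_zero hz]
    congr 1
    apply Complex.ext <;> simp [Complex.log_im] <;> ring
  rw [h, Complex.exp_add, ← Complex.ofReal_exp, Complex.re_ofReal_mul,
    Complex.exp_ofReal_mul_I_re]
  refine mul_nonneg (Real.exp_pos _).le (Real.cos_nonneg_of_mem_Icc ⟨?_, ?_⟩)
  · linarith [Complex.neg_pi_lt_arg z]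
  · linarith [Complex.arg_le_pi z]

lemma norm_symb_le_one {a : ℝ} (ha : 0 ≤ a) (m : ℝ) (w : ℂ) : ‖symb a m w‖ ≤ 1 := by
  rw [symb, Complex.norm_exp, Real.exp_le_one_iff, Complex.neg_re, Complex.re_ofReal_mul]
  exact neg_nonpos.mpr (mul_nonneg ha (re_sqrt_nonneg _))

lemma sqrtDisc_ne_zero {m : ℝ} (hm : 0 < m) {w : ℂ} (hw : 0 < w.im) : sqrtDisc m w ≠ 0 := by
  have h := Complex.slitPlane_ne_zero (disc_mem_slitPlane hm hw)
  rw [sqrtDisc, Complex.cpow_ne_zero_iff]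
  exact Or.inl h

lemma hasDerivAt_sqrtDisc {m : ℝ} (hm : 0 < m) {w : ℂ} (hw : 0 < w.im) :
    HasDerivAt (sqrtDisc m) (-(w / sqrtDisc m w)) w := by
  have hs := disc_mem_slitPlane hm hw
  have h0 := Complex.slitPlane_ne_zero hs
  have h := (((hasDerivAt_id w).pow 2).const_sub ((m : ℂ) ^ 2)).cpow_const (c := (1 : ℂ) / 2) hs
  refine h.congr_deriv ?_
  have e : (1 : ℂ) / 2 - 1 = -(1 / 2) := by norm_num
  simp only [Pi.pow_apply, id]
  rw [e, Complex.cpow_neg, sqrtDisc]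
  push_cast
  ring

lemma hasDerivAt_symb (a : ℝ) {m : ℝ} (hm : 0 < m) {w : ℂ} (hw : 0 < w.im) :
    HasDerivAt (symb a m) (symbDeriv a m w) w := by
  refine (((hasDerivAt_sqrtDisc hm hw).const_mul (a : ℂ)).neg.cexp).congr_deriv ?_
  simp only [symbDeriv, symb, Pi.neg_apply]
  ring

lemma hasDerivAt_symbDeriv (a : ℝ) {m : ℝ} (hm : 0 < m) {w : ℂ} (hw : 0 < w.im) :
    HasDerivAt (symbDeriv a m) (symbDeriv₂ a m w) w := by
  have h0 := sqrtDisc_ne_zero hm hw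
  refine ((((hasDerivAt_id w).div (hasDerivAt_sqrtDisc hm hw) h0).const_mul (a : ℂ)).mul
    (hasDerivAt_symb a hm hw)).congr_deriv ?_
  simp only [symbDeriv, symbDeriv₂, id, Pi.div_apply]
  field_simp
  ring

lemma norm_disc_sq (m : ℝ) (w : ℂ) :
    ‖(m : ℂ) ^ 2 - w ^ 2‖ ^ 2 = (m ^ 2 - w.re ^ 2 + w.im ^ 2) ^ 2 + (2 * w.re * w.im) ^ 2 := by
  rw [← Complex.normSq_eq_norm_sq, Complex.normSq_apply]
  simp [pow_two]; ring

lemma abs_disc_re_le_norm_disc (m : ℝ) (w : ℂ) :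
    |m ^ 2 - w.re ^ 2| ≤ ‖(m : ℂ) ^ 2 - w ^ 2‖ := by
  refine abs_le_of_sq_le_sq ?_ (norm_nonneg _)
  rw [norm_disc_sq]
  nlinarith [mul_nonneg (sq_nonneg m) (sq_nonneg w.im), sq_nonneg (w.im ^ 2),
    mul_nonneg (sq_nonneg w.re) (sq_nonneg w.im)]

lemma mul_im_le_norm_disc (m : ℝ) (w : ℂ) : m * w.im ≤ ‖(m : ℂ) ^ 2 - w ^ 2‖ := by
  refine abs_le_of_sq_le_sq' ?_ (norm_nonneg _) |>.2
  rw [norm_disc_sq]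
  nlinarith [sq_nonneg (m ^ 2 - w.re ^ 2), sq_nonneg (w.im ^ 2), sq_nonneg (w.re * w.im),
    sq_nonneg (m * w.im)]

lemma norm_symbDeriv_le {a m W : ℝ} (ha : 0 ≤ a) {w : ℂ} (hW : ‖w‖ ≤ W) :
    ‖symbDeriv a m w‖ ≤ a * W * ‖sqrtDisc m w‖⁻¹ := by
  have h1 := norm_symb_le_one ha m w
  rw [symbDeriv, norm_mul, norm_mul, norm_div, Complex.norm_real, Real.norm_of_nonneg ha,
    div_eq_mul_inv]
  calc a * (‖w‖ * ‖sqrtDisc m w‖⁻¹) * ‖symb a m w‖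
      ≤ a * (W * ‖sqrtDisc m w‖⁻¹) * 1 := by
        have : 0 ≤ W := (norm_nonneg w).trans hW
        gcongr
    _ = _ := by ring

lemma norm_symbDeriv₂_le {a m W T : ℝ} (ha : 0 ≤ a) {w : ℂ} (hW : ‖w‖ ≤ W)
    (h0 : sqrtDisc m w ≠ 0) (hT : ‖sqrtDisc m w‖ ≤ T) :
    ‖symbDeriv₂ a m w‖
      ≤ (a * (T ^ 2 + W ^ 2) + a ^ 2 * (W ^ 2 * T)) * (‖sqrtDisc m w‖⁻¹) ^ 3 := by
  have h1 := norm_symb_le_one ha m w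
  have hσ : 0 < ‖sqrtDisc m w‖ := norm_pos_iff.mpr h0
  have hW0 : 0 ≤ ‖w‖ := norm_nonneg w
  rw [symbDeriv₂, norm_mul]
  calc _ ≤ (a * (1 / ‖sqrtDisc m w‖ + ‖w‖ ^ 2 / ‖sqrtDisc m w‖ ^ 3)
        + a ^ 2 * (‖w‖ ^ 2 / ‖sqrtDisc m w‖ ^ 2)) * 1 := by
        gcongr
        refine (norm_add_le _ _).trans ?_
        rw [norm_mul, norm_mul, norm_pow, Complex.norm_real, Real.norm_of_nonneg ha]
        gcongr
        · refine (norm_add_le _ _).trans ?_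
          simp
        · simp
    _ = (a * (‖sqrtDisc m w‖ ^ 2 + ‖w‖ ^ 2) + a ^ 2 * (‖w‖ ^ 2 * ‖sqrtDisc m w‖))
        * (‖sqrtDisc m w‖⁻¹) ^ 3 := by field_simp
    _ ≤ _ := by gcongr

/-- The regularised density `ω ↦ exp (-a √(m² - (ω + i s)²)) ζ ω`. -/
def dens (a m : ℝ) (ζ : ℝ → ℂ) (s ω : ℝ) : ℂ :=
  symb a m ((ω : ℂ) + Complex.I * (s : ℂ)) * ζ ω

/-- The first derivative of `dens` in `ω`. -/
def densDeriv (a m : ℝ) (ζ : ℝ → ℂ) (s ω : ℝ) : ℂ :=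
  symbDeriv a m ((ω : ℂ) + Complex.I * (s : ℂ)) * ζ ω
    + symb a m ((ω : ℂ) + Complex.I * (s : ℂ)) * deriv ζ ω

/-- The second derivative of `dens` in `ω`. -/
def densDeriv₂ (a m : ℝ) (ζ : ℝ → ℂ) (s ω : ℝ) : ℂ :=
  symbDeriv₂ a m ((ω : ℂ) + Complex.I * (s : ℂ)) * ζ ω
    + 2 * symbDeriv a m ((ω : ℂ) + Complex.I * (s : ℂ)) * deriv ζ ω
    + symb a m ((ω : ℂ) + Complex.I * (s : ℂ)) * deriv (deriv ζ) ω

/-- The derivative of `densDeriv` in the vertical variable `s`. -/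
def densDerivVert (a m : ℝ) (ζ : ℝ → ℂ) (s ω : ℝ) : ℂ :=
  symbDeriv₂ a m ((ω : ℂ) + Complex.I * (s : ℂ)) * Complex.I * ζ ω
    + symbDeriv a m ((ω : ℂ) + Complex.I * (s : ℂ)) * Complex.I * deriv ζ ω

lemma im_horizontal (s ω : ℝ) : ((ω : ℂ) + Complex.I * (s : ℂ)).im = s := by simp

lemma re_horizontal (s ω : ℝ) : ((ω : ℂ) + Complex.I * (s : ℂ)).re = ω := by simp

lemma hasDerivAt_horizontal {F : ℂ → ℂ} {F' : ℂ} {s ω : ℝ}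
    (h : HasDerivAt F F' ((ω : ℂ) + Complex.I * (s : ℂ))) :
    HasDerivAt (fun ω : ℝ => F ((ω : ℂ) + Complex.I * (s : ℂ))) F' ω :=
  (h.comp_add_const (ω : ℂ) (Complex.I * (s : ℂ))).comp_ofReal

lemma hasDerivAt_vertical {F : ℂ → ℂ} {F' : ℂ} {s ω : ℝ}
    (h : HasDerivAt F F' ((ω : ℂ) + Complex.I * (s : ℂ))) :
    HasDerivAt (fun s : ℝ => F ((ω : ℂ) + Complex.I * (s : ℂ))) (F' * Complex.I) s := by
  have h2 : HasDerivAt (fun z : ℂ => (ω : ℂ) + Complex.I * z) Complex.I (s : ℂ) := by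
    simpa using ((hasDerivAt_id (s : ℂ)).const_mul Complex.I).const_add (ω : ℂ)
  exact (HasDerivAt.comp (s : ℂ) h h2).comp_ofReal

lemma hasDerivAt_dens (a : ℝ) {m : ℝ} (hm : 0 < m) {ζ : ℝ → ℂ} (hζ : Differentiable ℝ ζ)
    {s : ℝ} (hs : 0 < s) (ω : ℝ) : HasDerivAt (dens a m ζ s) (densDeriv a m ζ s ω) ω :=
  (hasDerivAt_horizontal (hasDerivAt_symb a hm (by rwa [im_horizontal]))).mul
    (hζ ω).hasDerivAt

lemma hasDerivAt_densDeriv (a : ℝ) {m : ℝ} (hm : 0 < m) {ζ : ℝ → ℂ} (hζ : Differentiable ℝ ζ)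
    (hζ' : Differentiable ℝ (deriv ζ)) {s : ℝ} (hs : 0 < s) (ω : ℝ) :
    HasDerivAt (densDeriv a m ζ s) (densDeriv₂ a m ζ s ω) ω := by
  have hw : 0 < ((ω : ℂ) + Complex.I * (s : ℂ)).im := by rwa [im_horizontal]
  refine (((hasDerivAt_horizontal (hasDerivAt_symbDeriv a hm hw)).mul (hζ ω).hasDerivAt).add
    ((hasDerivAt_horizontal (hasDerivAt_symb a hm hw)).mul (hζ' ω).hasDerivAt)).congr_deriv ?_
  simp only [densDeriv₂]
  ring

lemma hasDerivAt_densDeriv_vert (a : ℝ) {m : ℝ} (hm : 0 < m) (ζ : ℝ → ℂ) {s : ℝ} (hs : 0 < s)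
    (ω : ℝ) :
    HasDerivAt (fun s => densDeriv a m ζ s ω) (densDerivVert a m ζ s ω) s := by
  have hw : 0 < ((ω : ℂ) + Complex.I * (s : ℂ)).im := by rwa [im_horizontal]
  exact ((hasDerivAt_vertical (hasDerivAt_symbDeriv a hm hw)).mul_const _).add
    ((hasDerivAt_vertical (hasDerivAt_symb a hm hw)).mul_const _)

lemma continuous_densDeriv₂ (a : ℝ) {m : ℝ} (hm : 0 < m) {ζ : ℝ → ℂ} (hζ : Continuous ζ)
    (hζ' : Continuous (deriv ζ)) (hζ'' : Continuous (deriv (deriv ζ))) {s : ℝ} (hs : 0 < s) :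
    Continuous (densDeriv₂ a m ζ s) := by
  have hw : ∀ ω : ℝ, 0 < ((ω : ℂ) + Complex.I * (s : ℂ)).im := fun ω => by rwa [im_horizontal]
  have hS : Continuous fun ω : ℝ => sqrtDisc m ((ω : ℂ) + Complex.I * (s : ℂ)) :=
    continuous_iff_continuousAt.mpr fun ω =>
      (hasDerivAt_horizontal (hasDerivAt_sqrtDisc hm (hw ω))).continuousAt
  have h0 : ∀ ω : ℝ, sqrtDisc m ((ω : ℂ) + Complex.I * (s : ℂ)) ≠ 0 := fun ω =>
    sqrtDisc_ne_zero hm (hw ω)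
  unfold densDeriv₂ symbDeriv₂ symbDeriv symb
  fun_prop (disch := intro ω; simp [h0 ω])

lemma densDeriv_eq_zero (a m : ℝ) {ζ : ℝ → ℂ} (s : ℝ) {ω : ℝ} (hω : ω ∉ tsupport ζ) :
    densDeriv a m ζ s ω = 0 ∧ densDeriv₂ a m ζ s ω = 0 ∧ densDerivVert a m ζ s ω = 0 := by
  have hsub : tsupport (deriv ζ) ⊆ tsupport ζ :=
    closure_minimal support_deriv_subset (isClosed_tsupport _)
  have z₀ : ζ ω = 0 := image_eq_zero_of_notMem_tsupport hω
  have z₁ : deriv ζ ω = 0 := image_eq_zero_of_notMem_tsupport fun h => hω (hsub h)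
  have z₂ : deriv (deriv ζ) ω = 0 := image_eq_zero_of_notMem_tsupport fun h =>
    hω (hsub (closure_minimal support_deriv_subset (isClosed_tsupport _) h))
  simp [densDeriv, densDeriv₂, densDerivVert, z₀, z₁, z₂]

lemma exists_dens_bounds {a : ℝ} (ha : 0 ≤ a) {m : ℝ} (hm : 0 < m) {ζ : ℝ → ℂ}
    (hζ : Continuous ζ) (hζ' : Continuous (deriv ζ)) (hζ'' : Continuous (deriv (deriv ζ)))
    (hsupp : HasCompactSupport ζ) :
    ∃ C : ℝ, 0 ≤ C ∧ ∀ s ω : ℝ, 0 < s → s ≤ 2 →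
      ‖densDeriv a m ζ s ω‖ ≤ C * ‖sqrtDisc m ((ω : ℂ) + Complex.I * (s : ℂ))‖⁻¹ ∧
      ‖densDeriv₂ a m ζ s ω‖ ≤ C * ‖sqrtDisc m ((ω : ℂ) + Complex.I * (s : ℂ))‖⁻¹ ^ 3 ∧
      ‖densDerivVert a m ζ s ω‖
        ≤ C * ‖sqrtDisc m ((ω : ℂ) + Complex.I * (s : ℂ))‖⁻¹ ^ 3 := by
  obtain ⟨B₀, hB₀⟩ := hsupp.exists_bound_of_continuous hζ
  obtain ⟨B₁, hB₁⟩ := hsupp.deriv.exists_bound_of_continuous hζ'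
  obtain ⟨B₂, hB₂⟩ := hsupp.deriv.deriv.exists_bound_of_continuous hζ''
  obtain ⟨R, hR⟩ := hsupp.isBounded.exists_norm_le
  set B := max B₀ (max B₁ B₂) with hB
  have hb₀ : ∀ ω, ‖ζ ω‖ ≤ B := fun ω => (hB₀ ω).trans (le_max_left _ _)
  have hb₁ : ∀ ω, ‖deriv ζ ω‖ ≤ B := fun ω =>
    (hB₁ ω).trans ((le_max_left _ _).trans (le_max_right _ _))
  have hb₂ : ∀ ω, ‖deriv (deriv ζ) ω‖ ≤ B := fun ω =>
    (hB₂ ω).trans ((le_max_right _ _).trans (le_max_right _ _))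
  have hB0 : 0 ≤ B := (norm_nonneg _).trans (hb₀ 0)
  set W := |R| + 2 with hWdef
  have hW0 : 0 ≤ W := by positivity
  set T := (m ^ 2 + W ^ 2) ^ (1 / 2 : ℝ) with hT
  have hT0 : 0 ≤ T := by positivity
  set A := a * (T ^ 2 + W ^ 2) + a ^ 2 * (W ^ 2 * T) with hA
  have hA0 : 0 ≤ A := by positivity
  refine ⟨B * (A + 2 * (a * W * T ^ 2) + T ^ 3 + a * W + T), by positivity, ?_⟩
  intro s ω hs hs2
  have hw : 0 < ((ω : ℂ) + Complex.I * (s : ℂ)).im := by rwa [im_horizontal]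
  have h0 := sqrtDisc_ne_zero hm hw
  by_cases hω : ω ∈ tsupport ζ
  swap
  · obtain ⟨z₁, z₂, z₃⟩ := densDeriv_eq_zero a m s hω
    rw [z₁, z₂, z₃, norm_zero]
    refine ⟨?_, ?_, ?_⟩ <;> positivity
  have hwn : ‖(ω : ℂ) + Complex.I * (s : ℂ)‖ ≤ W := by
    refine (norm_add_le _ _).trans ?_
    have h1 := (hR ω hω).trans (le_abs_self R)
    rw [norm_mul, Complex.norm_I, Complex.norm_real, Complex.norm_real, one_mul,
      Real.norm_of_nonneg hs.le]
    linarith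
  have hσT : ‖sqrtDisc m ((ω : ℂ) + Complex.I * (s : ℂ))‖ ≤ T := by
    rw [norm_sqrtDisc, hT]
    refine Real.rpow_le_rpow (norm_nonneg _) ((norm_sub_le _ _).trans ?_) (by norm_num)
    rw [norm_pow, norm_pow, Complex.norm_real, Real.norm_of_nonneg hm.le]
    gcongr
  unfold densDeriv densDeriv₂ densDerivVert
  generalize (ω : ℂ) + Complex.I * (s : ℂ) = w at *
  have hσ : 0 < ‖sqrtDisc m w‖ := norm_pos_iff.mpr h0
  have g₀ := norm_symb_le_one ha m w
  have g₁ := norm_symbDeriv_le (m := m) ha hwn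
  have g₂ := norm_symbDeriv₂_le ha hwn h0 hσT
  have hinv : 1 ≤ T * ‖sqrtDisc m w‖⁻¹ := by
    rw [← div_eq_mul_inv, one_le_div hσ]; exact hσT
  have hr0 : 0 ≤ ‖sqrtDisc m w‖⁻¹ := by positivity
  generalize ‖sqrtDisc m w‖⁻¹ = r at *
  have g₁' : ‖symbDeriv a m w‖ ≤ a * W * T ^ 2 * r ^ 3 := by
    refine g₁.trans ?_
    calc a * W * r = a * W * r * 1 := by ring
      _ ≤ a * W * r * (T * r) ^ 2 := by gcongr; exact one_le_pow₀ hinv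
      _ = _ := by ring
  have g₀' : ‖symb a m w‖ ≤ T ^ 3 * r ^ 3 := by
    rw [← mul_pow]; exact g₀.trans (one_le_pow₀ hinv)
  have g₀'' := g₀.trans hinv
  have i₀ := hb₀ ω
  have i₁ := hb₁ ω
  have i₂ := hb₂ ω
  refine ⟨?_, ?_, ?_⟩
  · calc _ ≤ a * W * r * B + T * r * B := by
          refine (norm_add_le _ _).trans ?_
          rw [norm_mul, norm_mul]
          gcongr
      _ = B * (a * W + T) * r := by ring
      _ ≤ _ := by
          have : 0 ≤ A + 2 * (a * W * T ^ 2) + T ^ 3 := by positivity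
          refine mul_le_mul_of_nonneg_right (mul_le_mul_of_nonneg_left ?_ hB0) (by positivity)
          linarith
  · calc _ ≤ A * r ^ 3 * B + 2 * (a * W * T ^ 2 * r ^ 3) * B + T ^ 3 * r ^ 3 * B := by
          refine (norm_add₃_le).trans ?_
          rw [norm_mul, norm_mul, norm_mul, norm_mul, Complex.norm_two]
          gcongr
      _ = B * (A + 2 * (a * W * T ^ 2) + T ^ 3) * r ^ 3 := by ring
      _ ≤ _ := by
          have : 0 ≤ a * W + T := by positivity
          refine mul_le_mul_of_nonneg_right (mul_le_mul_of_nonneg_left ?_ hB0) (by positivity)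
          linarith
  · calc _ ≤ A * r ^ 3 * B + a * W * T ^ 2 * r ^ 3 * B := by
          refine (norm_add_le _ _).trans ?_
          rw [norm_mul, norm_mul, norm_mul, norm_mul, Complex.norm_I, mul_one, mul_one]
          gcongr
      _ = B * (A + a * W * T ^ 2) * r ^ 3 := by ring
      _ ≤ _ := by
          have : 0 ≤ a * W * T ^ 2 + T ^ 3 + (a * W + T) := by positivity
          refine mul_le_mul_of_nonneg_right (mul_le_mul_of_nonneg_left ?_ hB0) (by positivity)
          linarith

lemma locallyIntegrable_singular {m : ℝ} (hm : 0 < m) :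
    LocallyIntegrable (fun ω : ℝ => |m ^ 2 - ω ^ 2| ^ (-(3 / 4) : ℝ)) := by
  have h0 : ∀ c : ℝ, LocallyIntegrable (fun ω : ℝ => |ω - c| ^ (-(3 / 4) : ℝ)) := by
    intro c
    have h1 : LocallyIntegrable (fun ω : ℝ => |ω| ^ (-(3 / 4) : ℝ)) := by
      refine locallyIntegrable_of_norm_le_rpow (C := 1) (α := 3 / 4) (by simp) (by norm_num)
        (ae_of_all _ fun ω => ?_) (by fun_prop : Measurable _).aestronglyMeasurable
      rw [Real.norm_of_nonneg (by positivity), one_mul, Real.norm_eq_abs]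
    rw [locallyIntegrable_iff] at h1 ⊢
    intro K hK
    have h2 := h1 _ (hK.image (continuous_sub_right c))
    rw [← (measurePreserving_sub_right volume c).integrableOn_comp_preimage
      (measurableEmbedding_subRight c)] at h2
    exact h2.mono_set (Set.subset_preimage_image _ _)
  have h1 := ((h0 m).add (h0 (-m))).smul (m ^ (-(3 / 4) : ℝ))
  refine h1.mono (by fun_prop : Measurable _).aestronglyMeasurable ?_
  have hne : ∀ c : ℝ, ∀ᵐ ω : ℝ, ω ≠ c := fun c => by
    simp [ae_iff, measure_singleton]
  filter_upwards [hne m, hne (-m)] with ω h₁ h₂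
  have p₁ : 0 < |ω - m| := abs_pos.mpr (sub_ne_zero.mpr h₁)
  have p₂ : 0 < |ω - -m| := abs_pos.mpr (sub_ne_zero.mpr h₂)
  have hfac : |m ^ 2 - ω ^ 2| = |ω - m| * |ω - -m| := by
    rw [← abs_mul, abs_sub_comm]; congr 1; ring
  have hsum : m ≤ |ω - m| ∨ m ≤ |ω - -m| := by
    by_contra! h
    have := abs_lt.mp h.1
    have := abs_lt.mp h.2
    rcases le_total 0 ω with h | h <;> linarith
  simp only [Pi.smul_apply, Pi.add_apply, smul_eq_mul]
  rw [Real.norm_of_nonneg (by positivity), Real.norm_of_nonneg (by positivity), hfac,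
    Real.mul_rpow p₁.le p₂.le]
  have q₁ : 0 ≤ |ω - m| ^ (-(3 / 4) : ℝ) := by positivity
  have q₂ : 0 ≤ |ω - -m| ^ (-(3 / 4) : ℝ) := by positivity
  have qm : 0 ≤ m ^ (-(3 / 4) : ℝ) := by positivity
  rcases hsum with h | h
  · have := Real.rpow_le_rpow_of_nonpos hm h (by norm_num : (-(3 / 4) : ℝ) ≤ 0)
    nlinarith [mul_nonneg qm q₁, mul_le_mul_of_nonneg_right this q₂]
  · have := Real.rpow_le_rpow_of_nonpos hm h (by norm_num : (-(3 / 4) : ℝ) ≤ 0)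
    nlinarith [mul_nonneg qm q₂, mul_le_mul_of_nonneg_right this q₁]

lemma le_of_min_bound {y C h D : ℝ} (hC : 0 ≤ C) (hh : 0 < h) (hD : 0 < D)
    (h₁ : y ≤ 2 * C * D ^ (-(1 / 2) : ℝ)) (h₂ : y ≤ C * h * D ^ (-(3 / 2) : ℝ)) :
    y ≤ 2 * C * h ^ (1 / 4 : ℝ) * D ^ (-(3 / 4) : ℝ) := by
  rcases le_total D h with hle | hle
  · refine h₁.trans ?_
    have : D ^ (-(1 / 2) : ℝ) = D ^ (1 / 4 : ℝ) * D ^ (-(3 / 4) : ℝ) := by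
      rw [← Real.rpow_add hD]; norm_num
    rw [this, ← mul_assoc]
    gcongr
  · refine h₂.trans ?_
    have e₁ : D ^ (-(3 / 2) : ℝ) = D ^ (-(3 / 4) : ℝ) * D ^ (-(3 / 4) : ℝ) := by
      rw [← Real.rpow_add hD]; norm_num
    have e₂ : h = h ^ (1 / 4 : ℝ) * h ^ (3 / 4 : ℝ) := by
      rw [← Real.rpow_add hh]; norm_num
    have e₃ : h ^ (3 / 4 : ℝ) * D ^ (-(3 / 4) : ℝ) ≤ 1 := by
      rw [Real.rpow_neg hD.le, ← div_eq_mul_inv, div_le_one (by positivity)]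
      gcongr
    calc C * h * D ^ (-(3 / 2) : ℝ)
        = C * h ^ (1 / 4 : ℝ) * D ^ (-(3 / 4) : ℝ) * (h ^ (3 / 4 : ℝ) * D ^ (-(3 / 4) : ℝ)) := by
          conv_lhs => rw [e₁, e₂]
          ring
      _ ≤ C * h ^ (1 / 4 : ℝ) * D ^ (-(3 / 4) : ℝ) * 1 := by gcongr
      _ ≤ _ := by
          have : 0 ≤ C * h ^ (1 / 4 : ℝ) * D ^ (-(3 / 4) : ℝ) := by positivity
          linarith

lemma inv_norm_sqrtDisc_le {m : ℝ} {s ω : ℝ} (hD : 0 < |m ^ 2 - ω ^ 2|) :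
    ‖sqrtDisc m ((ω : ℂ) + Complex.I * (s : ℂ))‖⁻¹ ≤ |m ^ 2 - ω ^ 2| ^ (-(1 / 2) : ℝ) := by
  have h := abs_disc_re_le_norm_disc m ((ω : ℂ) + Complex.I * (s : ℂ))
  rw [re_horizontal] at h
  rw [norm_sqrtDisc, Real.rpow_neg hD.le]
  gcongr

lemma inv_norm_sqrtDisc_pow_three_le {m : ℝ} {s ω : ℝ} (hD : 0 < |m ^ 2 - ω ^ 2|) :
    ‖sqrtDisc m ((ω : ℂ) + Complex.I * (s : ℂ))‖⁻¹ ^ 3 ≤ |m ^ 2 - ω ^ 2| ^ (-(3 / 2) : ℝ) := by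
  refine (pow_le_pow_left₀ (by positivity) (inv_norm_sqrtDisc_le hD) 3).trans_eq ?_
  rw [← Real.rpow_natCast, ← Real.rpow_mul hD.le]
  norm_num

lemma inv_norm_sqrtDisc_pow_three_le_mul {m : ℝ} (hm : 0 < m) {s ω : ℝ} (hs : 0 < s)
    (hD : 0 < |m ^ 2 - ω ^ 2|) :
    ‖sqrtDisc m ((ω : ℂ) + Complex.I * (s : ℂ))‖⁻¹ ^ 3
      ≤ (m * s) ^ (-(3 / 4) : ℝ) * |m ^ 2 - ω ^ 2| ^ (-(3 / 4) : ℝ) := by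
  have h := abs_disc_re_le_norm_disc m ((ω : ℂ) + Complex.I * (s : ℂ))
  have h' := mul_im_le_norm_disc m ((ω : ℂ) + Complex.I * (s : ℂ))
  rw [re_horizontal] at h
  rw [im_horizontal] at h'
  rw [norm_sqrtDisc]
  generalize ‖(m : ℂ) ^ 2 - ((ω : ℂ) + Complex.I * (s : ℂ)) ^ 2‖ = p at *
  have hp : 0 < p := hD.trans_le h
  have e : (p ^ (1 / 2 : ℝ))⁻¹ ^ 3 = p ^ (-(3 / 4) : ℝ) * p ^ (-(3 / 4) : ℝ) := by
    rw [← Real.rpow_neg hp.le, ← Real.rpow_natCast, ← Real.rpow_mul hp.le, ← Real.rpow_add hp]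
    norm_num
  rw [e]
  have hms : 0 < m * s := by positivity
  refine mul_le_mul ?_ ?_ (by positivity) (by positivity)
  · exact Real.rpow_le_rpow_of_nonpos hms h' (by norm_num)
  · exact Real.rpow_le_rpow_of_nonpos hD h (by norm_num)

lemma norm_fourier_deriv_eq {u v : ℝ → ℂ} (hu : ∀ ω, HasDerivAt u (v ω) ω)
    (hv : Continuous v) (hsupp : HasCompactSupport u) (t : ℝ) :
    ‖∫ ω : ℝ, v ω * Complex.exp (-Complex.I * (ω : ℂ) * (t : ℂ))‖
      = |t| * ‖∫ ω : ℝ, u ω * Complex.exp (-Complex.I * (ω : ℂ) * (t : ℂ))‖ := by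
  have hsupp' : HasCompactSupport v := by
    have : v = deriv u := funext fun ω => (hu ω).deriv.symm
    rw [this]; exact hsupp.deriv
  have hcu : Continuous u := continuous_iff_continuousAt.mpr fun ω => (hu ω).continuousAt
  have he : ∀ ω : ℝ, HasDerivAt (fun ω : ℝ => Complex.exp (-Complex.I * (ω : ℂ) * (t : ℂ)))
      (Complex.exp (-Complex.I * (ω : ℂ) * (t : ℂ)) * (-Complex.I * (t : ℂ))) ω := by
    intro ω
    have h := (((hasDerivAt_id (ω : ℂ)).const_mul (-Complex.I)).mul_const (t : ℂ)).cexp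
    simpa using h.comp_ofReal
  have hce : Continuous fun ω : ℝ => Complex.exp (-Complex.I * (ω : ℂ) * (t : ℂ)) := by fun_prop
  have key := integral_mul_deriv_eq_deriv_mul_of_integrable (fun ω _ => hu ω) (fun ω _ => he ω)
    ((hcu.mul (hce.mul continuous_const)).integrable_of_hasCompactSupport hsupp.mul_right)
    ((hv.mul hce).integrable_of_hasCompactSupport hsupp'.mul_right)
    ((hcu.mul hce).integrable_of_hasCompactSupport hsupp.mul_right)
  rw [← norm_neg, ← key]
  simp_rw [← mul_assoc (u _)]
  rw [integral_mul_const, norm_mul, mul_comm]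
  simp

lemma norm_phase (ω t : ℝ) : ‖Complex.exp (-Complex.I * (ω : ℂ) * (t : ℂ))‖ = 1 := by
  rw [Complex.norm_exp]
  simp

lemma ae_abs_sq_sub_sq_pos (m : ℝ) : ∀ᵐ ω : ℝ, 0 < |m ^ 2 - ω ^ 2| := by
  have hne : ∀ c : ℝ, ∀ᵐ ω : ℝ, ω ≠ c := fun c => by
    simp [ae_iff, measure_singleton]
  filter_upwards [hne m, hne (-m)] with ω h₁ h₂
  refine abs_pos.mpr fun h => ?_
  rcases sq_eq_sq_iff_eq_or_eq_neg.mp (sub_eq_zero.mp h) with h | h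
  · exact h₁ h.symm
  · exact h₂ (by rw [h, neg_neg])

lemma hasCompactSupport_dens (a m : ℝ) {ζ : ℝ → ℂ} (hsupp : HasCompactSupport ζ) (s : ℝ) :
    HasCompactSupport (dens a m ζ s) :=
  hsupp.mul_left

lemma exists_fourier_dens_decay {a : ℝ} (ha : 0 ≤ a) {m : ℝ} (hm : 0 < m) {ζ : ℝ → ℂ}
    (hζ : Differentiable ℝ ζ) (hζ' : Differentiable ℝ (deriv ζ))
    (hζ'' : Continuous (deriv (deriv ζ))) (hsupp : HasCompactSupport ζ) :
    ∃ K : ℝ, ∀ ε t : ℝ, 0 < ε → ε ≤ 1 → 1 ≤ |t| →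
      ‖∫ ω : ℝ, dens a m ζ ε ω * Complex.exp (-Complex.I * (ω : ℂ) * (t : ℂ))‖
        ≤ K * |t| ^ (-(5 / 4) : ℝ) := by
  obtain ⟨C, hC, hbd⟩ := exists_dens_bounds ha hm hζ.continuous hζ'.continuous hζ'' hsupp
  set Ψ : ℝ → ℝ := (tsupport ζ).indicator fun ω => |m ^ 2 - ω ^ 2| ^ (-(3 / 4) : ℝ) with hΨ
  have hΨint : Integrable Ψ := by
    rw [hΨ, integrable_indicator_iff (isClosed_tsupport ζ).measurableSet]
    exact (locallyIntegrable_singular hm).integrableOn_isCompact hsupp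
  refine ⟨2 * C * (∫ ω, Ψ ω) + C * m ^ (-(3 / 4) : ℝ) * ∫ ω, Ψ ω, ?_⟩
  intro ε t hε hε1 ht
  have ht0 : 0 < |t| := by linarith
  set h := |t|⁻¹ with hh
  have hh0 : 0 < h := by positivity
  have hh1 : h ≤ 1 := inv_le_one_of_one_le₀ ht
  have hεh : 0 < ε + h := by positivity
  have hdc : ∀ s, 0 < s → Continuous (densDeriv a m ζ s) := fun s hs =>
    continuous_iff_continuousAt.mpr fun ω => (hasDerivAt_densDeriv a hm hζ hζ' hs ω).continuousAt
  have hds : ∀ s, 0 < s → HasCompactSupport (densDeriv a m ζ s) := fun s hs => by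
    have : densDeriv a m ζ s = deriv (dens a m ζ s) :=
      funext fun ω => (hasDerivAt_dens a hm hζ hs ω).deriv.symm
    rw [this]; exact (hasCompactSupport_dens a m hsupp s).deriv
  have hce : Continuous fun ω : ℝ => Complex.exp (-Complex.I * (ω : ℂ) * (t : ℂ)) := by fun_prop
  have hint : ∀ s, 0 < s → Integrable fun ω : ℝ =>
      densDeriv a m ζ s ω * Complex.exp (-Complex.I * (ω : ℂ) * (t : ℂ)) := fun s hs =>
    ((hdc s hs).mul hce).integrable_of_hasCompactSupport (hds s hs).mul_right
  have hdiff : ∀ᵐ ω : ℝ, ‖densDeriv a m ζ ε ω - densDeriv a m ζ (ε + h) ω‖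
      ≤ 2 * C * h ^ (1 / 4 : ℝ) * Ψ ω := by
    filter_upwards [ae_abs_sq_sub_sq_pos m] with ω hD
    by_cases hω : ω ∈ tsupport ζ
    swap
    · rw [(densDeriv_eq_zero a m ε hω).1, (densDeriv_eq_zero a m (ε + h) hω).1, hΨ,
        Set.indicator_of_notMem hω]
      simp
    rw [hΨ, Set.indicator_of_mem hω]
    refine le_of_min_bound hC hh0 hD ?_ ?_
    · refine (norm_sub_le _ _).trans ?_
      have b₁ := (hbd ε ω hε (by linarith)).1.trans
        (mul_le_mul_of_nonneg_left (inv_norm_sqrtDisc_le hD) hC)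
      have b₂ := (hbd (ε + h) ω hεh (by linarith)).1.trans
        (mul_le_mul_of_nonneg_left (inv_norm_sqrtDisc_le hD) hC)
      linarith
    · have := Convex.norm_image_sub_le_of_norm_hasDerivWithin_le
        (f := fun s => densDeriv a m ζ s ω) (f' := fun s => densDerivVert a m ζ s ω)
        (s := Set.Icc ε (ε + h)) (C := C * |m ^ 2 - ω ^ 2| ^ (-(3 / 2) : ℝ))
        (x := ε + h) (y := ε)
        (fun s hs => (hasDerivAt_densDeriv_vert a hm ζ (hε.trans_le hs.1) ω).hasDerivWithinAt)
        (fun s hs => (hbd s ω (hε.trans_le hs.1) (by linarith [hs.2])).2.2.trans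
          (mul_le_mul_of_nonneg_left (inv_norm_sqrtDisc_pow_three_le hD) hC))
        (convex_Icc _ _) ⟨by linarith, le_rfl⟩ ⟨le_rfl, by linarith⟩
      refine this.trans_eq ?_
      rw [Real.norm_eq_abs, show ε - (ε + h) = -h by ring, abs_neg, abs_of_pos hh0]
      ring
  have hsec : ∀ᵐ ω : ℝ, ‖densDeriv₂ a m ζ (ε + h) ω‖
      ≤ C * m ^ (-(3 / 4) : ℝ) * h ^ (-(3 / 4) : ℝ) * Ψ ω := by
    filter_upwards [ae_abs_sq_sub_sq_pos m] with ω hD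
    by_cases hω : ω ∈ tsupport ζ
    swap
    · rw [(densDeriv_eq_zero a m (ε + h) hω).2.1, hΨ, Set.indicator_of_notMem hω]
      simp
    rw [hΨ, Set.indicator_of_mem hω]
    refine (hbd (ε + h) ω hεh (by linarith)).2.1.trans ?_
    rw [mul_assoc C, mul_assoc C, ← Real.mul_rpow hm.le hh0.le]
    refine mul_le_mul_of_nonneg_left
      ((inv_norm_sqrtDisc_pow_three_le_mul hm hεh hD).trans ?_) hC
    refine mul_le_mul_of_nonneg_right ?_ (by positivity)
    exact Real.rpow_le_rpow_of_nonpos (by positivity) (by gcongr; linarith) (by norm_num)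
  have e₁ := norm_fourier_deriv_eq (hasDerivAt_dens a hm hζ hε) (hdc ε hε)
    (hasCompactSupport_dens a m hsupp ε) t
  have e₂ := norm_fourier_deriv_eq (hasDerivAt_densDeriv a hm hζ hζ' hεh)
    (continuous_densDeriv₂ a hm hζ.continuous hζ'.continuous hζ'' hεh) (hds _ hεh) t
  have i₁ : ‖∫ ω : ℝ, (densDeriv a m ζ ε ω - densDeriv a m ζ (ε + h) ω)
      * Complex.exp (-Complex.I * (ω : ℂ) * (t : ℂ))‖
      ≤ 2 * C * h ^ (1 / 4 : ℝ) * ∫ ω, Ψ ω := by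
    rw [← integral_const_mul]
    refine norm_integral_le_of_norm_le (hΨint.const_mul _) ?_
    filter_upwards [hdiff] with ω hω
    rwa [norm_mul, norm_phase, mul_one]
  have i₂ : ‖∫ ω : ℝ, densDeriv₂ a m ζ (ε + h) ω
      * Complex.exp (-Complex.I * (ω : ℂ) * (t : ℂ))‖
      ≤ C * m ^ (-(3 / 4) : ℝ) * h ^ (-(3 / 4) : ℝ) * ∫ ω, Ψ ω := by
    rw [← integral_const_mul]
    refine norm_integral_le_of_norm_le (hΨint.const_mul _) ?_
    filter_upwards [hsec] with ω hω
    rwa [norm_mul, norm_phase, mul_one]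
  have split : ‖∫ ω : ℝ, densDeriv a m ζ ε ω * Complex.exp (-Complex.I * (ω : ℂ) * (t : ℂ))‖
      ≤ ‖∫ ω : ℝ, (densDeriv a m ζ ε ω - densDeriv a m ζ (ε + h) ω)
          * Complex.exp (-Complex.I * (ω : ℂ) * (t : ℂ))‖
        + ‖∫ ω : ℝ, densDeriv a m ζ (ε + h) ω
          * Complex.exp (-Complex.I * (ω : ℂ) * (t : ℂ))‖ := by
    simp_rw [sub_mul]
    rw [integral_sub (hint ε hε) (hint _ hεh)]
    exact norm_le_norm_sub_add _ _
  have f₁ : h * h ^ (1 / 4 : ℝ) = |t| ^ (-(5 / 4) : ℝ) := by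
    rw [hh, Real.inv_rpow ht0.le, ← Real.rpow_neg ht0.le, ← Real.rpow_neg_one,
      ← Real.rpow_add ht0]
    norm_num
  have f₂ : h * (h * h ^ (-(3 / 4) : ℝ)) = |t| ^ (-(5 / 4) : ℝ) := by
    rw [hh, Real.inv_rpow ht0.le, ← Real.rpow_neg ht0.le, ← Real.rpow_neg_one,
      ← Real.rpow_add ht0, ← Real.rpow_add ht0]
    norm_num
  have solve : ∀ {x y : ℝ}, x = |t| * y → y = h * x := fun {x y} hxy => by
    rw [hxy, hh]; field_simp
  rw [solve e₁]
  rw [solve e₂] at split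
  calc _ ≤ h * (2 * C * h ^ (1 / 4 : ℝ) * (∫ ω, Ψ ω)
          + h * (C * m ^ (-(3 / 4) : ℝ) * h ^ (-(3 / 4) : ℝ) * ∫ ω, Ψ ω)) :=
        mul_le_mul_of_nonneg_left
          (split.trans (add_le_add i₁ (mul_le_mul_of_nonneg_left i₂ hh0.le))) hh0.le
    _ = 2 * C * (∫ ω, Ψ ω) * (h * h ^ (1 / 4 : ℝ))
        + C * m ^ (-(3 / 4) : ℝ) * (∫ ω, Ψ ω) * (h * (h * h ^ (-(3 / 4) : ℝ))) := by ring
    _ = _ := by rw [f₁, f₂]; ring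

lemma disc_horizontal (m ε ω : ℝ) :
    (m : ℂ) ^ 2 - ((ω : ℂ) + Complex.I * (ε : ℂ)) ^ 2
      = ((m ^ 2 - ω ^ 2 + ε ^ 2 : ℝ) : ℂ) + ((-(2 * ω * ε) : ℝ) : ℂ) * Complex.I := by
  push_cast
  linear_combination (-(ε : ℂ) ^ 2) * Complex.I_sq

lemma kCl_of_pos (m : ℝ) {ε : ℝ} (hε : 0 < ε) (ω : ℝ) :
    kCl m ((ω : ℂ) + Complex.I * (ε : ℂ))
      = Complex.I * sqrtDisc m ((ω : ℂ) + Complex.I * (ε : ℂ)) := by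
  rw [kCl, if_pos (by rwa [im_horizontal]), sqrtDisc]

lemma exp_half_real_log {q : ℝ} (hq : 0 < q) :
    Complex.exp ((Real.log q : ℂ) * (1 / 2)) = ((Real.sqrt q : ℝ) : ℂ) := by
  rw [Real.sqrt_eq_rpow, Real.rpow_def_of_pos hq]
  push_cast
  rfl

lemma exp_half_pi_I : Complex.exp ((Real.pi : ℂ) * Complex.I * (1 / 2)) = Complex.I := by
  rw [mul_one_div, mul_div_right_comm, Complex.exp_pi_div_two_mul_I]

lemma tendsto_kCl (m : ℝ) (hm : 0 < m) (ω : ℝ) (hω : 0 < |m ^ 2 - ω ^ 2|) :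
    Tendsto (fun ε : ℝ => kCl m ((ω : ℂ) + Complex.I * (ε : ℂ))) (𝓝[>] 0)
      (𝓝 (kCl m (ω : ℂ))) := by
  have hev : (fun ε : ℝ => Complex.I * sqrtDisc m ((ω : ℂ) + Complex.I * (ε : ℂ)))
      =ᶠ[𝓝[>] 0] fun ε : ℝ => kCl m ((ω : ℂ) + Complex.I * (ε : ℂ)) := by
    filter_upwards [self_mem_nhdsWithin] with ε hε using (kCl_of_pos m hε ω).symm
  refine Tendsto.congr' hev ?_
  set z : ℂ := ((m ^ 2 - ω ^ 2 : ℝ) : ℂ) with hz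
  have hzim : z.im = 0 := Complex.ofReal_im _
  have hzre : z.re = m ^ 2 - ω ^ 2 := Complex.ofReal_re _
  have hz0 : z ≠ 0 := by
    rw [hz, Complex.ofReal_ne_zero]; exact abs_pos.mp hω
  have hdisc : Tendsto (fun ε : ℝ => (m : ℂ) ^ 2 - ((ω : ℂ) + Complex.I * (ε : ℂ)) ^ 2)
      (𝓝[>] 0) (𝓝 z) := by
    have hc : Continuous fun ε : ℝ => (m : ℂ) ^ 2 - ((ω : ℂ) + Complex.I * (ε : ℂ)) ^ 2 := by
      fun_prop
    have := (hc.tendsto 0).mono_left (nhdsWithin_le_nhds (s := Set.Ioi 0))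
    simpa [hz] using this
  have him : ∀ ε : ℝ, ((m : ℂ) ^ 2 - ((ω : ℂ) + Complex.I * (ε : ℂ)) ^ 2).im = -(2 * ω * ε) := by
    intro ε
    rw [disc_horizontal, Complex.add_im, Complex.ofReal_im, Complex.im_ofReal_mul]; simp
  have of_log : ∀ L : ℂ, Tendsto (fun ε : ℝ => Complex.log
      ((m : ℂ) ^ 2 - ((ω : ℂ) + Complex.I * (ε : ℂ)) ^ 2)) (𝓝[>] 0) (𝓝 L) →
      Tendsto (fun ε : ℝ => Complex.I * sqrtDisc m ((ω : ℂ) + Complex.I * (ε : ℂ))) (𝓝[>] 0)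
        (𝓝 (Complex.I * Complex.exp (L * (1 / 2)))) := by
    intro L hL
    refine (((hL.mul_const (1 / 2 : ℂ)).cexp).const_mul Complex.I).congr' ?_
    filter_upwards [hdisc.eventually_ne hz0] with ε hε
    rw [sqrtDisc, Complex.cpow_def_of_ne_zero hε]
  have hnorm : ‖z‖ = |m ^ 2 - ω ^ 2| := by rw [hz, Complex.norm_real, Real.norm_eq_abs]
  rw [kCl, if_neg (by simp)]
  simp only [Complex.ofReal_re]
  by_cases h₁ : m ≤ ω
  · have hq : m ^ 2 - ω ^ 2 < 0 := lt_of_le_of_ne (by nlinarith) (abs_pos.mp hω)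
    have hlog := (Complex.tendsto_log_nhdsWithin_im_neg_of_re_neg_of_im_zero
      (by rw [hzre]; exact hq) hzim).comp (tendsto_nhdsWithin_iff.mpr ⟨hdisc, by
        filter_upwards [self_mem_nhdsWithin] with ε hε
        rw [him]
        have : 0 < ω * ε := mul_pos (hm.trans_le h₁) hε
        linarith⟩)
    convert of_log _ hlog using 2
    rw [if_pos h₁, hnorm, abs_of_neg hq, sub_mul, Complex.exp_sub, exp_half_real_log (by linarith),
      exp_half_pi_I, neg_sub, mul_div_cancel₀ _ Complex.I_ne_zero]
  rw [if_neg h₁]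
  by_cases h₂ : ω ≤ -m
  · have hq : m ^ 2 - ω ^ 2 < 0 := lt_of_le_of_ne (by nlinarith) (abs_pos.mp hω)
    have hlog := (Complex.tendsto_log_nhdsWithin_im_nonneg_of_re_neg_of_im_zero
      (by rw [hzre]; exact hq) hzim).comp (tendsto_nhdsWithin_iff.mpr ⟨hdisc, by
        filter_upwards [self_mem_nhdsWithin] with ε hε
        rw [him]
        have : 0 < -ω * ε := mul_pos (by linarith) hε
        linarith⟩)
    convert of_log _ hlog using 2
    rw [if_pos h₂, hnorm, abs_of_neg hq, add_mul, Complex.exp_add, exp_half_real_log (by linarith),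
      exp_half_pi_I, neg_sub]
    linear_combination (-(Real.sqrt (ω ^ 2 - m ^ 2) : ℂ)) * Complex.I_sq
  rw [if_neg h₂]
  push Not at h₁ h₂
  have hq : 0 < m ^ 2 - ω ^ 2 := by nlinarith
  have hlog := ((continuousAt_clog (x := z) (by
    rw [hz]; exact Complex.ofReal_mem_slitPlane.mpr hq)).tendsto).comp hdisc
  convert of_log _ hlog using 2
  rw [hz, ← Complex.ofReal_log hq.le, exp_half_real_log hq]

/-- `L¹`-convergence of the multiplicator kernels
`M̌_{x,ε} → M̌_{x,0}` as `ε → 0+`, where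
`M̌_{x,ε}(t) = (1/2π)∫ e^{ik(ω+iε)|x|} ζ(ω) e^{−iωt} dω`. -/
theorem multiplicator_L1_convergence
    (m : ℝ) (hm : 0 < m)
    (ζ : ℝ → ℂ) (hζ : ContDiff ℝ (⊤ : ℕ∞) ζ) (hζsupp : HasCompactSupport ζ)
    (x : ℝ)
    (Mx : ℝ → ℝ → ℂ)
    (hMx : ∀ ε t : ℝ, Mx ε t = ((1 / (2 * Real.pi) : ℝ) : ℂ)
      * ∫ ω : ℝ, Complex.exp (Complex.I * kCl m ((ω:ℂ) + Complex.I * (ε:ℂ))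
            * ((|x| : ℝ) : ℂ))
          * ζ ω * Complex.exp (-Complex.I * (ω:ℂ) * (t:ℂ))) :
    Tendsto (fun ε : ℝ => ∫ t : ℝ, ‖Mx ε t - Mx 0 t‖) (𝓝[>] (0:ℝ)) (𝓝 0) := by
  have hζd : Differentiable ℝ ζ := hζ.differentiable (by simp)
  have hζ1 : ContDiff ℝ (⊤ : ℕ∞) (deriv ζ) := (contDiff_infty_iff_deriv.mp hζ).2
  have hζ2 : ContDiff ℝ (⊤ : ℕ∞) (deriv (deriv ζ)) := (contDiff_infty_iff_deriv.mp hζ1).2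
  have ha : 0 ≤ |x| := abs_nonneg x
  have hintegrand : ∀ ε : ℝ, 0 < ε → ∀ ω t : ℝ,
      Complex.exp (Complex.I * kCl m ((ω:ℂ) + Complex.I * (ε:ℂ)) * ((|x| : ℝ) : ℂ))
          * ζ ω * Complex.exp (-Complex.I * (ω:ℂ) * (t:ℂ))
        = dens |x| m ζ ε ω * Complex.exp (-Complex.I * (ω:ℂ) * (t:ℂ)) := by
    intro ε hε ω t
    rw [kCl_of_pos m hε, dens, symb, ← mul_assoc Complex.I Complex.I, Complex.I_mul_I,
      neg_one_mul, neg_mul, mul_comm (sqrtDisc _ _)]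
  have hM : ∀ ε : ℝ, 0 < ε → ∀ t : ℝ, Mx ε t = ((1 / (2 * Real.pi) : ℝ) : ℂ)
      * ∫ ω : ℝ, dens |x| m ζ ε ω * Complex.exp (-Complex.I * (ω:ℂ) * (t:ℂ)) := by
    intro ε hε t
    rw [hMx]
    congr 2
    exact funext fun ω => hintegrand ε hε ω t
  have hcont : ∀ ε : ℝ, 0 < ε → Continuous (dens |x| m ζ ε) := fun ε hε =>
    continuous_iff_continuousAt.mpr fun ω => (hasDerivAt_dens |x| hm hζd hε ω).continuousAt
  have hnorm : ∀ ε ω t : ℝ,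
      ‖dens |x| m ζ ε ω * Complex.exp (-Complex.I * (ω:ℂ) * (t:ℂ))‖ ≤ ‖ζ ω‖ := by
    intro ε ω t
    rw [norm_mul, norm_phase, mul_one, dens, norm_mul]
    exact mul_le_of_le_one_left (norm_nonneg _) (norm_symb_le_one ha m _)
  have hζint : Integrable fun ω => ‖ζ ω‖ :=
    (hζ.continuous.integrable_of_hasCompactSupport hζsupp).norm
  have hlim : ∀ t : ℝ, Tendsto (fun ε => Mx ε t) (𝓝[>] 0) (𝓝 (Mx 0 t)) := by
    intro t
    simp only [hMx]
    refine Tendsto.const_mul _ ?_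
    refine tendsto_integral_filter_of_dominated_convergence (fun ω => ‖ζ ω‖) ?_ ?_ hζint ?_
    · filter_upwards [self_mem_nhdsWithin] with ε hε
      simp_rw [hintegrand ε hε]
      exact ((hcont ε hε).mul (by fun_prop)).aestronglyMeasurable
    · filter_upwards [self_mem_nhdsWithin] with ε hε
      simp_rw [hintegrand ε hε]
      exact ae_of_all _ fun ω => hnorm ε ω t
    · filter_upwards [ae_abs_sq_sub_sq_pos m] with ω hω
      rw [Complex.ofReal_zero, mul_zero, add_zero]
      exact ((((tendsto_kCl m hm ω hω).const_mul _).mul_const _).cexp.mul_const _).mul_const _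
  obtain ⟨K, hK⟩ := exists_fourier_dens_decay ha hm hζd (hζ1.differentiable (by simp))
    hζ2.continuous hζsupp
  set c : ℝ := 1 / (2 * Real.pi) with hc
  have hc0 : 0 ≤ c := by positivity
  set L : ℝ := c * (max K (∫ ω, ‖ζ ω‖) * 2 ^ (5 / 4 : ℝ)) with hL
  set b : ℝ → ℝ := fun t => L * (1 + ‖t‖) ^ (-(5 / 4) : ℝ) with hb
  have hbint : Integrable b := (integrable_one_add_norm (by norm_num)).const_mul _
  have hbound : ∀ ε t : ℝ, 0 < ε → ε ≤ 1 → ‖Mx ε t‖ ≤ b t := by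
    intro ε t hε hε1
    have hmax : 0 ≤ max K (∫ ω, ‖ζ ω‖) :=
      le_max_of_le_right (integral_nonneg fun _ => norm_nonneg _)
    have hu : (0 : ℝ) < 1 + |t| := by positivity
    rw [hM ε hε, norm_mul, Complex.norm_real, Real.norm_of_nonneg hc0]
    simp only [hb, hL]
    rw [Real.norm_eq_abs, mul_assoc, mul_assoc]
    refine mul_le_mul_of_nonneg_left ?_ hc0
    have hcmp : ∀ r : ℝ, 0 < r → 1 + |t| ≤ 2 * r →
        r ^ (-(5 / 4) : ℝ) ≤ 2 ^ (5 / 4 : ℝ) * (1 + |t|) ^ (-(5 / 4) : ℝ) := by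
      intro r hr hle
      refine (Real.rpow_le_rpow_of_nonpos (by positivity : 0 < (1 + |t|) / 2) (by linarith)
        (by norm_num)).trans_eq ?_
      rw [Real.div_rpow hu.le (by norm_num), Real.rpow_neg (by norm_num : (0 : ℝ) ≤ 2),
        div_inv_eq_mul, mul_comm]
    rcases le_total 1 |t| with ht | ht
    · refine (hK ε t hε hε1 ht).trans ?_
      exact mul_le_mul (le_max_left _ _) (hcmp |t| (by linarith) (by linarith)) (by positivity)
        hmax
    · refine (norm_integral_le_of_norm_le hζint (ae_of_all _ fun ω => hnorm ε ω t)).trans ?_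
      refine (le_max_right K _).trans (le_mul_of_one_le_right hmax ?_)
      simpa using hcmp 1 one_pos (by linarith)
  have hIoc : Set.Ioc (0 : ℝ) 1 ∈ 𝓝[>] (0 : ℝ) := Ioc_mem_nhdsGT one_pos
  have hbound0 : ∀ t : ℝ, ‖Mx 0 t‖ ≤ b t := fun t =>
    le_of_tendsto (hlim t).norm (by
      filter_upwards [hIoc] with ε hε using hbound ε t hε.1 hε.2)
  have hmeas : ∀ ε : ℝ, 0 < ε → AEStronglyMeasurable (Mx ε) := by
    intro ε hε
    have : Continuous fun t : ℝ =>
        ∫ ω : ℝ, dens |x| m ζ ε ω * Complex.exp (-Complex.I * (ω:ℂ) * (t:ℂ)) :=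
      continuous_of_dominated
        (fun t => ((hcont ε hε).mul (by fun_prop)).aestronglyMeasurable)
        (fun t => ae_of_all _ fun ω => hnorm ε ω t) hζint
        (ae_of_all _ fun ω => by fun_prop)
    rw [funext (hM ε hε)]
    exact (continuous_const.mul this).aestronglyMeasurable
  have hmeas0 : AEStronglyMeasurable (Mx 0) := by
    have hseq : Tendsto (fun n : ℕ => 1 / ((n : ℝ) + 1)) atTop (𝓝[>] 0) :=
      tendsto_nhdsWithin_iff.mpr ⟨tendsto_one_div_add_atTop_nhds_zero_nat,
        Eventually.of_forall fun n => by rw [Set.mem_Ioi]; positivity⟩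
    exact aestronglyMeasurable_of_tendsto_ae atTop
      (fun n : ℕ => hmeas (1 / ((n : ℝ) + 1)) (by positivity))
      (ae_of_all _ fun t => (hlim t).comp hseq)
  have key := tendsto_integral_filter_of_dominated_convergence (μ := volume) (l := 𝓝[>] (0 : ℝ))
    (F := fun ε t => ‖Mx ε t - Mx 0 t‖) (f := fun _ => (0 : ℝ)) (fun t => b t + b t)
    (by filter_upwards [self_mem_nhdsWithin] with ε hε using ((hmeas ε hε).sub hmeas0).norm)
    (by
      filter_upwards [hIoc] with ε hε
      refine ae_of_all _ fun t => ?_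
      rw [norm_norm]
      exact (norm_sub_le _ _).trans (add_le_add (hbound ε t hε.1 hε.2) (hbound0 t)))
    (hbint.add hbint)
    (ae_of_all _ fun t => by
      simpa using ((hlim t).sub_const (Mx 0 t)).norm)
  simpa using key
end
end
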